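/- arXiv:1410.2554 — 5 statements merged into one kernel-verified Lean document; each statement's English description precedes it below -/
import Mathlib

section
/- For all real numbers u > 0 and c > 0, one has (c/√(2π)) · ∫₀^∞ s^{-1/2} · exp(−(u + c·s)²/(2s)) ds = exp(−2·u·c), where the integral is the Lebesgue integral over (0,∞). -/
open MeasureTheory Real

lemma bih_lt (u c z : ℝ) (hu : 0 < u) (hc : 0 < c) : |z| < √(z ^ 2 + 4 * u * c) := by
  apply Real.lt_sqrt_of_sq_lt
  rw [sq_abs]
  have := mul_pos hu hc
  linarith

lemma bih_odd (u c : ℝ) :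
    ∫ z : ℝ, z / √(z ^ 2 + 4 * u * c) * rexp (-(1 / 2) * z ^ 2) = 0 := by
  have h := integral_neg_eq_self
    (fun z : ℝ => z / √(z ^ 2 + 4 * u * c) * rexp (-(1 / 2) * z ^ 2)) volume
  simp only [neg_sq, neg_div, neg_mul, integral_neg] at h ⊢
  linarith

lemma bih_int (u c : ℝ) (hu : 0 < u) (hc : 0 < c) :
    Integrable (fun z : ℝ => z / √(z ^ 2 + 4 * u * c) * rexp (-(1 / 2) * z ^ 2)) := by
  refine (integrable_exp_neg_mul_sq (b := 1 / 2) (by norm_num)).mono' ?_ ?_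
  · exact Measurable.aestronglyMeasurable (by fun_prop)
  · refine Filter.Eventually.of_forall fun z => ?_
    have hlt := bih_lt u c z hu hc
    have hR : 0 < √(z ^ 2 + 4 * u * c) := (abs_nonneg z).trans_lt hlt
    rw [norm_mul, Real.norm_eq_abs, Real.norm_eq_abs, abs_div, abs_of_pos hR,
      abs_of_pos (exp_pos _)]
    exact mul_le_of_le_one_left (exp_pos _).le ((div_le_one hR).2 hlt.le)

/-- Explicit evaluation, in the Brownian case, of the infinite-horizon supremum formula:
`(c/√(2π)) · ∫₀^∞ s^(-1/2) · exp(−(u + c·s)²/(2s)) ds = exp(−2·u·c)`. -/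
theorem brownian_infinite_horizon_integral (u c : ℝ) (hu : 0 < u) (hc : 0 < c) :
    c / Real.sqrt (2 * Real.pi) *
      ∫ s in Set.Ioi (0 : ℝ), s ^ (-(1 : ℝ) / 2) * Real.exp (-(u + c * s) ^ 2 / (2 * s)) =
    Real.exp (-2 * u * c) := by
  have huc := mul_pos hu hc
  set R : ℝ → ℝ := fun z => √(z ^ 2 + 4 * u * c) with hRdef
  have hlt : ∀ z, |z| < R z := fun z => bih_lt u c z hu hc
  have hR : ∀ z, 0 < R z := fun z => (abs_nonneg z).trans_lt (hlt z)
  have hR2 : ∀ z, R z ^ 2 = z ^ 2 + 4 * u * c := fun z => Real.sq_sqrt (by nlinarith [sq_nonneg z])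
  set X : ℝ → ℝ := fun z => (z + R z) / (2 * c) with hXdef
  have hX : ∀ z, 0 < X z := fun z => by
    have := (abs_lt.1 (hlt z)).1
    exact div_pos (by linarith) (by linarith)
  have hXq : ∀ z, c * X z ^ 2 = z * X z + u := fun z => by
    have := hR2 z
    simp only [hXdef]
    field_simp
    linear_combination this
  have hRd : ∀ z, HasDerivAt R (z / R z) z := fun z => by
    have h1 : HasDerivAt (fun z : ℝ => z ^ 2 + 4 * u * c) (2 * z) z := by
      simpa using (hasDerivAt_pow 2 z).add_const (4 * u * c)
    have h2 := h1.sqrt (by nlinarith [sq_nonneg z])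
    convert h2 using 1
    simp only [hRdef]
    rw [mul_div_mul_left _ _ two_ne_zero]
  have hXd : ∀ z, HasDerivAt X ((1 + z / R z) / (2 * c)) z := fun z =>
    ((hasDerivAt_id z).add (hRd z)).div_const _
  have hd : ∀ z, HasDerivAt (fun z => X z ^ 2) (2 * X z * ((1 + z / R z) / (2 * c))) z := fun z => by
    have h := (hXd z).pow 2
    norm_num at h
    exact h
  have hinj : Set.InjOn (fun z => X z ^ 2) Set.univ := by
    intro a _ b _ hab
    have hab' : X a = X b := (pow_left_inj₀ (hX a).le (hX b).le two_ne_zero).1 hab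
    have h1 := hXq a
    have h2 := hXq b
    rw [hab'] at h1
    exact mul_right_cancel₀ (hX b).ne' (by linarith)
  have himg : Set.image (fun z => X z ^ 2) Set.univ = Set.Ioi (0 : ℝ) := by
    ext s
    constructor
    · rintro ⟨z, -, rfl⟩
      exact pow_pos (hX z) 2
    · intro hs
      have hs : 0 < s := hs
      have hx : 0 < √s := Real.sqrt_pos.2 hs
      refine ⟨c * √s - u / √s, trivial, ?_⟩
      have hRe : R (c * √s - u / √s) = c * √s + u / √s := by
        have : (c * √s - u / √s) ^ 2 + 4 * u * c = (c * √s + u / √s) ^ 2 := by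
          field_simp
          ring
        simp only [hRdef]
        rw [this, Real.sqrt_sq (by positivity)]
      have hXe : X (c * √s - u / √s) = √s := by
        simp only [hXdef]
        rw [hRe]
        field_simp
        ring
      simp only [hXe]
      exact Real.sq_sqrt hs.le
  have key := integral_image_eq_integral_abs_deriv_smul MeasurableSet.univ
    (fun z _ => (hd z).hasDerivWithinAt) hinj
    (fun s : ℝ => s ^ (-(1 : ℝ) / 2) * Real.exp (-(u + c * s) ^ 2 / (2 * s)))
  rw [himg] at key
  rw [key, Measure.restrict_univ]
  have hpt : ∀ z, |2 * X z * ((1 + z / R z) / (2 * c))| •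
      ((X z ^ 2) ^ (-(1 : ℝ) / 2) * Real.exp (-(u + c * X z ^ 2) ^ 2 / (2 * X z ^ 2))) =
      rexp (-2 * u * c) / c *
        (rexp (-(1 / 2) * z ^ 2) + z / √(z ^ 2 + 4 * u * c) * rexp (-(1 / 2) * z ^ 2)) := fun z => by
    have hx := hX z
    have h1 : 0 < 1 + z / R z := by
      have := (abs_lt.1 (hlt z)).1
      have h3 : 1 + z / R z = (R z + z) / R z := by
        have := (hR z).ne'
        field_simp
      rw [h3]
      exact div_pos (by linarith) (hR z)
    have hpow : (X z ^ 2) ^ (-(1 : ℝ) / 2) = (X z)⁻¹ := by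
      rw [← Real.rpow_natCast, ← Real.rpow_mul hx.le]
      norm_num
      exact Real.rpow_neg_one _
    have hexp : -(u + c * X z ^ 2) ^ 2 / (2 * X z ^ 2) = -2 * u * c + -(1 / 2) * z ^ 2 := by
      have := hXq z
      rw [div_eq_iff (by positivity)]
      linear_combination (-(c * X z ^ 2 - u) - z * X z) * this
    rw [abs_of_pos (by positivity), hpow, hexp, Real.exp_add, smul_eq_mul]
    change _ = _ * (_ + z / R z * _)
    field_simp
  simp_rw [hpt]
  rw [integral_const_mul, integral_add (integrable_exp_neg_mul_sq (by norm_num))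
    (bih_int u c hu hc), bih_odd, integral_gaussian, add_zero]
  have : π / (1 / 2) = 2 * π := by ring
  rw [this]
  have : √(2 * π) ≠ 0 := by positivity
  field_simp
end

section
/- For all real numbers T > 0, x > 0 and z > 0, one has ∫₀^T (z/(T−s)) · (2π(T−s))^{-1/2} · exp(−z²/(2(T−s))) · (2πs)^{-1/2} · exp(−x²/(2s)) ds = (2πT)^{-1/2} · exp(−(x+z)²/(2T)), where the integral is the Lebesgue integral over (0, T). -/
open MeasureTheory Real

theorem cs_aux (T x z : ℝ) (hT : 0 < T) (hx : 0 < x) (hz : 0 < z) :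
    z * (∫ v in Set.Ioi (0 : ℝ), Real.exp (-(1 / (2 * T)) * (z * v - x / v) ^ 2)) =
      √(2 * Real.pi * T) / 2 := by
  set G : ℝ → ℝ := fun w => Real.exp (-(1 / (2 * T)) * w ^ 2) with hG
  have hb : 0 < 1 / (2 * T) := by positivity
  have hGi : Integrable G := integrable_exp_neg_mul_sq hb
  have hGv : ∫ w, G w = √(2 * Real.pi * T) := by
    rw [hG, integral_gaussian]; congr 1; field_simp
  set W : ℝ → ℝ := fun v => z * v - x / v with hW
  have hWd : ∀ v ∈ Set.Ioi (0 : ℝ), HasDerivWithinAt W (z + x / v ^ 2) (Set.Ioi 0) v := by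
    intro v hv
    have hv0 : v ≠ 0 := ne_of_gt hv
    have h1 := ((hasDerivAt_id v).const_mul z).sub
      ((hasDerivAt_inv hv0).const_mul x)
    refine (HasDerivAt.congr_deriv (h1.congr_of_eventuallyEq ?_) ?_).hasDerivWithinAt
    · exact Filter.Eventually.of_forall fun y => by simp [hW, div_eq_mul_inv]
    · field_simp; ring
  have hWinj : Set.InjOn W (Set.Ioi 0) := by
    have : StrictMonoOn W (Set.Ioi 0) := by
      intro a ha b hb hab
      have ha' : 0 < a := ha
      have h1 : x / b < x / a := by gcongr
      have h2 : z * a < z * b := by gcongr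
      simp only [hW]; linarith
    exact this.injOn
  have hWim : W '' Set.Ioi 0 = Set.univ := by
    refine Set.eq_univ_of_forall fun w => ?_
    have hxz : 0 < x * z := by positivity
    have hs : √(w ^ 2 + 4 * (x * z)) ^ 2 = w ^ 2 + 4 * (x * z) := Real.sq_sqrt (by positivity)
    have hlt : -w < √(w ^ 2 + 4 * (x * z)) := by
      apply Real.lt_sqrt_of_sq_lt; nlinarith
    have hpos : 0 < w + √(w ^ 2 + 4 * (x * z)) := by linarith
    refine ⟨(w + √(w ^ 2 + 4 * (x * z))) / (2 * z), by simp only [Set.mem_Ioi]; positivity, ?_⟩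
    simp only [hW]
    generalize √(w ^ 2 + 4 * (x * z)) = r at *
    field_simp
    nlinarith
  have hi := (integrableOn_image_iff_integrableOn_abs_deriv_smul measurableSet_Ioi hWd hWinj G).1
    (by rw [hWim]; exact hGi.integrableOn)
  have he := integral_image_eq_integral_abs_deriv_smul measurableSet_Ioi hWd hWinj G
  rw [hWim, setIntegral_univ, hGv] at he
  have hGW : Measurable (fun v => G (W v)) := by
    simp only [hG, hW]; fun_prop
  have habs : ∀ v : ℝ, |z + x / v ^ 2| = z + x / v ^ 2 := fun v => abs_of_nonneg (by positivity)
  simp only [habs, smul_eq_mul] at hi he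
  have hGpos : ∀ w, 0 < G w := fun w => Real.exp_pos _
  have hi1 : IntegrableOn (fun v => z * G (W v)) (Set.Ioi 0) := by
    refine Integrable.mono' hi (hGW.const_mul z).aestronglyMeasurable
      (Filter.Eventually.of_forall fun v => ?_)
    rw [Real.norm_of_nonneg (mul_nonneg hz.le (hGpos _).le)]
    have := hGpos (W v)
    gcongr
    have : 0 ≤ x / v ^ 2 := by positivity
    linarith
  have hi2 : IntegrableOn (fun v => x / v ^ 2 * G (W v)) (Set.Ioi 0) := by
    refine (hi.sub hi1).congr (Filter.Eventually.of_forall fun v => ?_)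
    simp only [Pi.sub_apply]; ring
  have hsplit : (∫ v in Set.Ioi (0 : ℝ), (z + x / v ^ 2) * G (W v)) =
      (∫ v in Set.Ioi (0 : ℝ), z * G (W v)) + ∫ v in Set.Ioi (0 : ℝ), x / v ^ 2 * G (W v) := by
    rw [← integral_add hi1 hi2]; congr 1; ext v; ring
  -- inversion
  have hPd : ∀ v ∈ Set.Ioi (0 : ℝ),
      HasDerivWithinAt (fun v => x / (z * v)) (-(x / (z * v ^ 2))) (Set.Ioi 0) v := by
    intro v hv
    have hv0 : v ≠ 0 := ne_of_gt hv
    have h1 := ((hasDerivAt_inv hv0).const_mul (x / z))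
    refine (HasDerivAt.congr_deriv (h1.congr_of_eventuallyEq ?_) ?_).hasDerivWithinAt
    · exact Filter.Eventually.of_forall fun y => by
        simp only [div_eq_mul_inv, mul_inv]; ring
    · field_simp
  have hPP : ∀ v ∈ Set.Ioi (0 : ℝ), x / (z * (x / (z * v))) = v := by
    intro v hv
    have hv0 : v ≠ 0 := ne_of_gt hv
    field_simp
  have hPpos : ∀ v ∈ Set.Ioi (0 : ℝ), x / (z * v) ∈ Set.Ioi (0 : ℝ) := by
    intro v hv
    have hv0 : 0 < v := hv
    simp only [Set.mem_Ioi]; positivity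
  have hPinj : Set.InjOn (fun v => x / (z * v)) (Set.Ioi 0) := by
    intro a ha b hb hab
    rw [← hPP a ha, ← hPP b hb]
    simp only at hab
    rw [hab]
  have hPim : (fun v => x / (z * v)) '' Set.Ioi 0 = Set.Ioi 0 := by
    ext v
    constructor
    · rintro ⟨u, hu, rfl⟩; exact hPpos u hu
    · intro hv; exact ⟨_, hPpos v hv, hPP v hv⟩
  have he2 := integral_image_eq_integral_abs_deriv_smul measurableSet_Ioi hPd hPinj
    (fun v => z * G (W v))
  rw [hPim] at he2
  have he3 : (∫ v in Set.Ioi (0 : ℝ), z * G (W v)) =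
      ∫ v in Set.Ioi (0 : ℝ), x / v ^ 2 * G (W v) := by
    rw [he2]
    refine setIntegral_congr_fun measurableSet_Ioi fun v hv => ?_
    have hv0 : 0 < v := hv
    have h1 : W (x / (z * v)) = - W v := by
      simp only [hW]; field_simp; ring
    have h2 : G (-W v) = G (W v) := by simp [hG]
    simp only [smul_eq_mul, h1, h2, abs_neg]
    rw [abs_of_nonneg (by positivity)]
    field_simp
  rw [hsplit, ← he3, integral_const_mul] at he
  change z * (∫ v in Set.Ioi (0 : ℝ), G (W v)) = _
  linarith

/-- Calculus identity: `∫₀^T (z/(T−s)) φ_{T−s}(z) φ_s(x) ds = φ_T(x+z)`, where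
`φ_r(y) = (2πr)^(-1/2) exp(−y²/(2r))` is the centered Gaussian density of variance `r`. -/
theorem kendall_reflection_density_identity (T x z : ℝ) (hT : 0 < T) (hx : 0 < x) (hz : 0 < z) :
    (∫ s in Set.Ioo (0 : ℝ) T,
        z / (T - s) * ((2 * Real.pi * (T - s)) ^ (-(1 : ℝ) / 2) *
            Real.exp (-z ^ 2 / (2 * (T - s)))) *
          ((2 * Real.pi * s) ^ (-(1 : ℝ) / 2) * Real.exp (-x ^ 2 / (2 * s)))) =
    (2 * Real.pi * T) ^ (-(1 : ℝ) / 2) * Real.exp (-(x + z) ^ 2 / (2 * T)) := by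
  have hrp : ∀ a : ℝ, 0 ≤ a → a ^ (-(1 : ℝ) / 2) = (√a)⁻¹ := by
    intro a ha
    rw [Real.sqrt_eq_rpow, ← Real.rpow_neg ha]; congr 1; norm_num
  have hd : ∀ v ∈ Set.Ioi (0 : ℝ), HasDerivWithinAt (fun v => T * v ^ 2 / (1 + v ^ 2))
      (2 * T * v / (1 + v ^ 2) ^ 2) (Set.Ioi 0) v := by
    intro v hv
    have h0 : 1 + v ^ 2 ≠ 0 := by positivity
    have h1 := ((hasDerivAt_pow 2 v).const_mul T).div ((hasDerivAt_pow 2 v).const_add 1) h0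
    refine (HasDerivAt.congr_deriv h1 ?_).hasDerivWithinAt
    field_simp; norm_num; ring
  have hinj : Set.InjOn (fun v : ℝ => T * v ^ 2 / (1 + v ^ 2)) (Set.Ioi 0) := by
    intro a ha b hb hab
    have ha' : 0 < a := ha
    have hb' : 0 < b := hb
    simp only at hab
    rw [div_eq_div_iff (by positivity) (by positivity)] at hab
    have h : a ^ 2 = b ^ 2 := by
      apply mul_left_cancel₀ hT.ne'; linarith
    exact (sq_eq_sq₀ ha'.le hb'.le).1 h
  have him : (fun v : ℝ => T * v ^ 2 / (1 + v ^ 2)) '' Set.Ioi 0 = Set.Ioo 0 T := by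
    ext s
    constructor
    · rintro ⟨v, hv, rfl⟩
      have hv' : 0 < v := hv
      refine ⟨by positivity, ?_⟩
      simp only
      rw [div_lt_iff₀ (by positivity)]; nlinarith
    · rintro ⟨h0, h1⟩
      have h2 : 0 < T - s := by linarith
      refine ⟨√(s / (T - s)), Real.sqrt_pos.2 (by positivity), ?_⟩
      simp only
      rw [Real.sq_sqrt (by positivity)]
      field_simp
      ring
  rw [← him, integral_image_eq_integral_abs_deriv_smul measurableSet_Ioi hd hinj]
  have hcs := cs_aux T x z hT hx hz
  have hpi := Real.pi_pos
  have key : ∀ v ∈ Set.Ioi (0 : ℝ), |2 * T * v / (1 + v ^ 2) ^ 2| •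
      (z / (T - T * v ^ 2 / (1 + v ^ 2)) *
        ((2 * Real.pi * (T - T * v ^ 2 / (1 + v ^ 2))) ^ (-(1 : ℝ) / 2) *
            Real.exp (-z ^ 2 / (2 * (T - T * v ^ 2 / (1 + v ^ 2))))) *
          ((2 * Real.pi * (T * v ^ 2 / (1 + v ^ 2))) ^ (-(1 : ℝ) / 2) *
            Real.exp (-x ^ 2 / (2 * (T * v ^ 2 / (1 + v ^ 2)))))) =
      (z / (Real.pi * T) * Real.exp (-(x + z) ^ 2 / (2 * T))) *
        Real.exp (-(1 / (2 * T)) * (z * v - x / v) ^ 2) := by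
    intro v hv
    have hv' : 0 < v := hv
    have e1 : T - T * v ^ 2 / (1 + v ^ 2) = T / (1 + v ^ 2) := by field_simp; ring
    rw [e1, hrp _ (by positivity), hrp _ (by positivity), abs_of_nonneg (by positivity),
      smul_eq_mul]
    have e2 : √(2 * Real.pi * (T / (1 + v ^ 2))) * √(2 * Real.pi * (T * v ^ 2 / (1 + v ^ 2))) =
        2 * Real.pi * T * v / (1 + v ^ 2) := by
      rw [← Real.sqrt_mul (by positivity), Real.sqrt_eq_iff_mul_self_eq (by positivity)
        (by positivity)]
      field_simp
    have e3 : Real.exp (-z ^ 2 / (2 * (T / (1 + v ^ 2)))) *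
        Real.exp (-x ^ 2 / (2 * (T * v ^ 2 / (1 + v ^ 2)))) =
        Real.exp (-(x + z) ^ 2 / (2 * T)) * Real.exp (-(1 / (2 * T)) * (z * v - x / v) ^ 2) := by
      rw [← Real.exp_add, ← Real.exp_add]
      congr 1
      field_simp
      ring
    calc _ = 2 * T * v / (1 + v ^ 2) ^ 2 * (z / (T / (1 + v ^ 2))) *
          (√(2 * Real.pi * (T / (1 + v ^ 2))) * √(2 * Real.pi * (T * v ^ 2 / (1 + v ^ 2))))⁻¹ *
          (Real.exp (-z ^ 2 / (2 * (T / (1 + v ^ 2)))) *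
            Real.exp (-x ^ 2 / (2 * (T * v ^ 2 / (1 + v ^ 2))))) := by
          rw [mul_inv]; ring
      _ = _ := by
          rw [e2, e3, ← mul_assoc]
          congr 2
          field_simp
  rw [setIntegral_congr_fun measurableSet_Ioi key, integral_const_mul, hrp _ (by positivity)]
  have hsq : √(2 * Real.pi * T) ^ 2 = 2 * Real.pi * T := Real.sq_sqrt (by positivity)
  have hsp : 0 < √(2 * Real.pi * T) := Real.sqrt_pos.2 (by positivity)
  calc _ = (1 / (Real.pi * T)) * Real.exp (-(x + z) ^ 2 / (2 * T)) *
        (z * ∫ v in Set.Ioi (0 : ℝ), Real.exp (-(1 / (2 * T)) * (z * v - x / v) ^ 2)) := by ring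
    _ = _ := by
        rw [hcs]
        generalize √(2 * Real.pi * T) = r at *
        field_simp
        linarith
end

section
/- For all real numbers T > 0 and u > 0, (2πT)^{-1/2} · ∫_u^∞ exp(−w²/(2T)) dw = (1/(2π)) · ∫₀^T (s·(T−s))^{-1/2} · exp(−u²/(2s)) ds, where both integrals are Lebesgue integrals. -/
open MeasureTheory Real

lemma aux_subst (T u : ℝ) (hT : 0 < T) :
    ∫ s in Set.Ioo (0 : ℝ) T, (s * (T - s)) ^ (-(1 : ℝ) / 2) * Real.exp (-u ^ 2 / (2 * s)) =
      ∫ x in Set.Ioi (0 : ℝ), 2 * (Real.exp (-u ^ 2 * (1 + x ^ 2) / (2 * T)) / (1 + x ^ 2)) := by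
  have himg : (fun x : ℝ => T / (1 + x ^ 2)) '' Set.Ioi 0 = Set.Ioo 0 T := by
    ext s
    constructor
    · rintro ⟨x, hx, rfl⟩
      have hx' : 0 < x := hx
      have : 0 < x ^ 2 := by positivity
      refine ⟨by positivity, ?_⟩
      show T / (1 + x ^ 2) < T
      rw [div_lt_iff₀ (by positivity)]
      nlinarith
    · rintro ⟨h0, h1⟩
      have h2 : 0 < T / s - 1 := by
        rw [sub_pos, lt_div_iff₀ h0]; linarith
      refine ⟨√(T / s - 1), Real.sqrt_pos.2 h2, ?_⟩
      show T / (1 + √(T / s - 1) ^ 2) = s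
      rw [Real.sq_sqrt h2.le]
      field_simp
      ring
  have hinj : Set.InjOn (fun x : ℝ => T / (1 + x ^ 2)) (Set.Ioi 0) := by
    intro x hx y hy h
    have hx' : 0 < x := hx
    have hy' : 0 < y := hy
    have h' : T / (1 + x ^ 2) = T / (1 + y ^ 2) := h
    rw [div_eq_div_iff (by positivity) (by positivity)] at h'
    have h3 := mul_left_cancel₀ hT.ne' h'
    have : x ^ 2 = y ^ 2 := by linarith
    exact (sq_eq_sq₀ hx'.le hy'.le).1 this
  have hder : ∀ x ∈ Set.Ioi (0 : ℝ), HasDerivWithinAt (fun x : ℝ => T / (1 + x ^ 2))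
      (-(2 * T * x) / (1 + x ^ 2) ^ 2) (Set.Ioi 0) x := by
    intro x _
    have h1 : HasDerivAt (fun x : ℝ => 1 + x ^ 2) (2 * x) x := by
      simpa using (hasDerivAt_pow 2 x).const_add 1
    have h2 := (hasDerivAt_const x T).div h1 (by positivity)
    refine (h2.congr_deriv ?_).hasDerivWithinAt
    ring
  rw [← himg, integral_image_eq_integral_abs_deriv_smul measurableSet_Ioi hder hinj]
  refine setIntegral_congr_fun measurableSet_Ioi ?_
  intro x hx
  have hx' : 0 < x := hx
  have e1 : T / (1 + x ^ 2) * (T - T / (1 + x ^ 2)) = (T * x / (1 + x ^ 2)) ^ 2 := by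
    field_simp
    ring
  have e2 : ((T * x / (1 + x ^ 2)) ^ 2) ^ (-(1 : ℝ) / 2) = (T * x / (1 + x ^ 2))⁻¹ := by
    rw [← Real.rpow_natCast, ← Real.rpow_mul (by positivity)]
    norm_num
    rw [Real.rpow_neg_one, inv_div]
  have e3 : |-(2 * T * x) / (1 + x ^ 2) ^ 2| = 2 * T * x / (1 + x ^ 2) ^ 2 := by
    rw [neg_div, abs_neg, abs_of_pos (by positivity)]
  have e4 : -u ^ 2 / (2 * (T / (1 + x ^ 2))) = -u ^ 2 * (1 + x ^ 2) / (2 * T) := by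
    field_simp
  simp only [smul_eq_mul]
  rw [e1, e2, e3, e4]
  field_simp

lemma aux_inner (T u x : ℝ) (hT : 0 < T) (hu : 0 < u) :
    IntegrableOn (fun w : ℝ => w / T * Real.exp (-w ^ 2 * (1 + x ^ 2) / (2 * T))) (Set.Ioi u) ∧
    ∫ w in Set.Ioi u, w / T * Real.exp (-w ^ 2 * (1 + x ^ 2) / (2 * T)) =
      Real.exp (-u ^ 2 * (1 + x ^ 2) / (2 * T)) / (1 + x ^ 2) := by
  have hc : (0 : ℝ) < 1 + x ^ 2 := by positivity
  have hd : ∀ w ∈ Set.Ici u, HasDerivAt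
      (fun w : ℝ => -(Real.exp (-w ^ 2 * (1 + x ^ 2) / (2 * T)) / (1 + x ^ 2)))
      (w / T * Real.exp (-w ^ 2 * (1 + x ^ 2) / (2 * T))) w := by
    intro w _
    have h1 : HasDerivAt (fun w : ℝ => -w ^ 2 * (1 + x ^ 2) / (2 * T))
        (-(2 * w) * (1 + x ^ 2) / (2 * T)) w := by
      simpa using (((hasDerivAt_pow 2 w).neg.mul_const (1 + x ^ 2)).div_const (2 * T))
    refine ((h1.exp.div_const (1 + x ^ 2)).neg).congr_deriv ?_
    field_simp
  have hlim : Filter.Tendsto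
      (fun w : ℝ => -(Real.exp (-w ^ 2 * (1 + x ^ 2) / (2 * T)) / (1 + x ^ 2)))
      Filter.atTop (nhds 0) := by
    have h1 : Filter.Tendsto (fun w : ℝ => -(w ^ 2 * ((1 + x ^ 2) / (2 * T))))
        Filter.atTop Filter.atBot :=
      Filter.tendsto_neg_atTop_atBot.comp
        ((Filter.tendsto_pow_atTop two_ne_zero).atTop_mul_const (by positivity))
    have h2 := ((Real.tendsto_exp_atBot.comp h1).div_const (1 + x ^ 2)).neg
    simp only [zero_div, neg_zero] at h2
    refine h2.congr ?_
    intro w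
    simp only [Function.comp]
    congr 3
    ring
  have hpos : ∀ w ∈ Set.Ioi u, 0 ≤ w / T * Real.exp (-w ^ 2 * (1 + x ^ 2) / (2 * T)) := by
    intro w hw
    have : 0 < w := hu.trans hw
    positivity
  refine ⟨integrableOn_Ioi_deriv_of_nonneg' hd hpos hlim, ?_⟩
  rw [integral_Ioi_of_hasDerivAt_of_nonneg' hd hpos hlim]
  ring

/-- Calculus identity combining the finite-horizon supremum formula for Brownian motion with the
reflection principle:
`(2πT)^(-1/2) ∫_u^∞ exp(−w²/(2T)) dw = (1/(2π)) ∫₀^T (s(T−s))^(-1/2) exp(−u²/(2s)) ds`. -/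
theorem brownian_finite_horizon_integral_identity (T u : ℝ) (hT : 0 < T) (hu : 0 < u) :
    (2 * Real.pi * T) ^ (-(1 : ℝ) / 2) *
        ∫ w in Set.Ioi u, Real.exp (-w ^ 2 / (2 * T)) =
      1 / (2 * Real.pi) *
        ∫ s in Set.Ioo (0 : ℝ) T, (s * (T - s)) ^ (-(1 : ℝ) / 2) *
          Real.exp (-u ^ 2 / (2 * s)) := by
  have hpi := Real.pi_pos
  rw [aux_subst T u hT, integral_const_mul]
  have hswap : ∫ x in Set.Ioi (0 : ℝ), ∫ w in Set.Ioi u,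
        w / T * Real.exp (-w ^ 2 * (1 + x ^ 2) / (2 * T)) =
      ∫ w in Set.Ioi u, ∫ x in Set.Ioi (0 : ℝ),
        w / T * Real.exp (-w ^ 2 * (1 + x ^ 2) / (2 * T)) := by
    apply integral_integral_swap
    rw [integrable_prod_iff]
    · refine ⟨Filter.Eventually.of_forall fun x => (aux_inner T u x hT hu).1, ?_⟩
      have hn : ∀ x : ℝ, ∫ w in Set.Ioi u,
          ‖w / T * Real.exp (-w ^ 2 * (1 + x ^ 2) / (2 * T))‖ =
          Real.exp (-u ^ 2 * (1 + x ^ 2) / (2 * T)) / (1 + x ^ 2) := by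
        intro x
        rw [← (aux_inner T u x hT hu).2]
        refine setIntegral_congr_fun measurableSet_Ioi ?_
        intro w hw
        have : 0 < w := hu.trans hw
        exact Real.norm_of_nonneg (by positivity)
      simp only [Function.uncurry]
      simp_rw [hn]
      refine (integrable_inv_one_add_sq.integrableOn (s := Set.Ioi (0 : ℝ))).mono' ?_ ?_
      · refine Continuous.aestronglyMeasurable ?_
        refine Continuous.div (by fun_prop) (by fun_prop) ?_
        intro x
        positivity
      · refine Filter.Eventually.of_forall fun x => ?_
        rw [Real.norm_of_nonneg (by positivity), div_eq_mul_inv]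
        refine mul_le_of_le_one_left (by positivity) ?_
        rw [Real.exp_le_one_iff]
        refine div_nonpos_of_nonpos_of_nonneg ?_ (by positivity)
        rw [neg_mul, neg_nonpos]
        positivity
    · refine Continuous.aestronglyMeasurable ?_
      simp only [Function.uncurry_def]
      fun_prop
  have hl : ∫ x in Set.Ioi (0 : ℝ), Real.exp (-u ^ 2 * (1 + x ^ 2) / (2 * T)) / (1 + x ^ 2) =
      ∫ x in Set.Ioi (0 : ℝ), ∫ w in Set.Ioi u,
        w / T * Real.exp (-w ^ 2 * (1 + x ^ 2) / (2 * T)) := by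
    simp_rw [(aux_inner T u _ hT hu).2]
  have hr : ∫ w in Set.Ioi u, ∫ x in Set.Ioi (0 : ℝ),
        w / T * Real.exp (-w ^ 2 * (1 + x ^ 2) / (2 * T)) =
      ∫ w in Set.Ioi u, √(2 * π * T) / (2 * T) * Real.exp (-w ^ 2 / (2 * T)) := by
    refine setIntegral_congr_fun measurableSet_Ioi ?_
    intro w hw
    have hw' : 0 < w := hu.trans hw
    have h1 : ∀ x : ℝ, w / T * Real.exp (-w ^ 2 * (1 + x ^ 2) / (2 * T)) =
        w / T * Real.exp (-w ^ 2 / (2 * T)) * Real.exp (-(w ^ 2 / (2 * T)) * x ^ 2) := by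
      intro x
      rw [mul_assoc, ← Real.exp_add]
      congr 2
      ring
    simp only [h1]
    rw [integral_const_mul, integral_gaussian_Ioi]
    have h2 : √(π / (w ^ 2 / (2 * T))) = √(2 * π * T) / w := by
      rw [show π / (w ^ 2 / (2 * T)) = (2 * π * T) / w ^ 2 by field_simp,
        Real.sqrt_div (by positivity), Real.sqrt_sq hw'.le]
    rw [h2]
    field_simp
  rw [hl, hswap, hr, integral_const_mul]
  have hp : (2 * π * T) ^ (-(1 : ℝ) / 2) = √(2 * π * T) / (2 * π * T) := by
    rw [neg_div, Real.rpow_neg (by positivity), ← Real.sqrt_eq_rpow, Real.sqrt_div_self']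
    rw [one_div]
  rw [hp]
  field_simp
end

section
/- Let α ∈ (1,2), let u > 0 and c > 0 be real numbers, and set a = c·cos(π(α−2)/2). Then (c/π) · ∫₀^∞ s^{−1/α} · [ ∫₀^∞ exp(−t^α) · cos( t·s^{−1/α}·(u + c·s) − t^α·tan(πα/2) ) dt ] ds = Σ_{n=0}^∞ (−a)^n · u^{(α−1)·n} / Γ(1 + (α−1)·n), where Γ is the Gamma function and the series on the right-hand side is the Mittag-Leffler function evaluated appropriately. -/
open MeasureTheory Real

theorem fourier_half (h : ℝ → ℝ) (hc : Continuous h) (hi : Integrable h) (g : ℝ → ℂ)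
    (hg : ∀ τ : ℝ, ∫ x : ℝ, Complex.exp (-(τ * x : ℝ) * Complex.I) * (h x : ℂ) = g τ)
    (hgi : Integrable g) (u : ℝ) :
    (∫ τ in Set.Ioi (0:ℝ), Complex.exp ((u * τ : ℝ) * Complex.I) * g τ).re = π * h u := by
  have hF : FourierTransform.fourier (fun x => (h x : ℂ)) = fun w : ℝ => g (2 * π * w) := by
    ext w
    rw [Real.fourier_real_eq_integral_exp_smul, ← hg]
    congr 1; ext x; rw [smul_eq_mul]; congr 2; push_cast; ring
  have hp : (2 * π : ℝ) ≠ 0 := by positivity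
  have inv := Continuous.fourierInv_fourier_eq (f := fun x => (h x : ℂ)) (by fun_prop) hi.ofReal
    (by rw [hF]; exact hgi.comp_mul_left' hp)
  have inv := congrFun inv u
  rw [hF, Real.fourierInv_eq'] at inv
  set G : ℝ → ℂ := fun τ => Complex.exp ((u * τ : ℝ) * Complex.I) * g τ with hG
  have hGi : Integrable G := by
    refine hgi.bdd_mul (c := 1) (Continuous.aestronglyMeasurable (by fun_prop)) ?_
    filter_upwards with x
    rw [Complex.norm_exp_ofReal_mul_I]
  have e1 : ∫ v : ℝ, G (2 * π * v) = (h u : ℂ) := by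
    rw [← inv]; congr 1; ext v; simp only [hG, smul_eq_mul, RCLike.inner_apply, conj_trivial]
    congr 2; push_cast; ring
  rw [Measure.integral_comp_mul_left G (2 * π)] at e1
  have hconj : ∀ τ, G (-τ) = (starRingEnd ℂ) (G τ) := by
    intro τ
    simp only [hG, ← hg, map_mul, ← integral_conj, ← Complex.exp_conj]
    congr 2
    · simp
    · ext x; simp
  have e2 : ∫ τ, (G τ).re = 2 * ∫ τ in Set.Ioi (0:ℝ), (G τ).re := by
    rw [← integral_comp_abs (f := fun τ => (G τ).re)]
    congr 1; ext τ
    rcases abs_choice τ with h | h <;> rw [h]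
    rw [hconj, Complex.conj_re]
  have e3 : (∫ τ in Set.Ioi (0:ℝ), G τ).re = ∫ τ in Set.Ioi (0:ℝ), (G τ).re :=
    (integral_re (𝕜 := ℂ) hGi.integrableOn).symm
  have e4 : (∫ τ, G τ).re = ∫ τ, (G τ).re :=
    (integral_re (𝕜 := ℂ) hGi).symm
  have e5 := congrArg Complex.re e1
  rw [Complex.smul_re, e4, e2, Complex.ofReal_re, abs_of_pos (by positivity), smul_eq_mul] at e5
  rw [e3, ← e5]
  field_simp

theorem gammaC_int (p : ℝ) (hp : 0 ≤ p) (z : ℂ) (hz : 0 < z.re) :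
    IntegrableOn (fun x : ℝ => ((x ^ p : ℝ) : ℂ) * Complex.exp (-z * x)) (Set.Ioi 0) := by
  have h := integrableOn_rpow_mul_exp_neg_mul_rpow (p := 1) (s := p) (b := z.re) (by linarith) one_pos hz
  refine h.mono' ?_ ?_
  · refine (Measurable.aestronglyMeasurable ?_)
    fun_prop
  · filter_upwards [ae_restrict_mem measurableSet_Ioi] with x hx
    have hx : (0:ℝ) < x := hx
    rw [norm_mul, Complex.norm_real, Complex.norm_exp, Real.norm_of_nonneg (by positivity)]
    simp

theorem gammaC (p : ℝ) (hp : 0 ≤ p) (z : ℂ) (hz : 0 < z.re) :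
    ∫ x in Set.Ioi (0:ℝ), ((x ^ p : ℝ) : ℂ) * Complex.exp (-z * x)
      = (Real.Gamma (1 + p) : ℂ) * z ^ (-(1 + p : ℝ) : ℂ) := by
  set U : Set ℂ := {z | 0 < z.re} with hU
  have hUo : IsOpen U := isOpen_lt continuous_const Complex.continuous_re
  have hUc : Convex ℝ U := convex_halfSpace_re_gt 0
  set f1 : ℂ → ℂ := fun z => ∫ x in Set.Ioi (0:ℝ), ((x ^ p : ℝ) : ℂ) * Complex.exp (-z * x)
  set f2 : ℂ → ℂ := fun z => (Real.Gamma (1 + p) : ℂ) * z ^ (-(1 + p : ℝ) : ℂ)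
  have d1 : DifferentiableOn ℂ f1 U := by
    intro w hw
    have hw : 0 < w.re := hw
    have hs : {z : ℂ | w.re / 2 < z.re} ∈ nhds w :=
      (isOpen_lt continuous_const Complex.continuous_re).mem_nhds (by simp; linarith)
    have := hasDerivAt_integral_of_dominated_loc_of_deriv_le (μ := volume.restrict (Set.Ioi (0:ℝ)))
      (F := fun (z : ℂ) (x : ℝ) => ((x ^ p : ℝ) : ℂ) * Complex.exp (-z * x))
      (F' := fun (z : ℂ) (x : ℝ) => ((x ^ p : ℝ) : ℂ) * (Complex.exp (-z * x) * (-1 * x)))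
      (bound := fun x => x ^ (p + 1) * Real.exp (-(w.re / 2) * x ^ (1:ℝ))) (x₀ := w) hs
      ?_ (gammaC_int p hp w hw) ?_ ?_ ?_ ?_
    · exact this.2.differentiableAt.differentiableWithinAt
    · filter_upwards with z
      exact Measurable.aestronglyMeasurable (by fun_prop)
    · exact Measurable.aestronglyMeasurable (by fun_prop)
    · filter_upwards [ae_restrict_mem measurableSet_Ioi] with x hx z hz
      have hx : (0:ℝ) < x := hx
      have hz : w.re / 2 < z.re := hz
      rw [norm_mul, norm_mul, Complex.norm_real, Complex.norm_exp,
        Real.norm_of_nonneg (by positivity), rpow_add hx, rpow_one]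
      have : ‖(-1 * x : ℂ)‖ = x := by simp [abs_of_pos hx]
      rw [this]
      have h2 : (-z * x : ℂ).re ≤ -(w.re / 2) * x := by
        simp; nlinarith
      calc _ = x ^ p * x * Real.exp ((-z * x : ℂ).re) := by ring
        _ ≤ _ := by gcongr
    · exact integrableOn_rpow_mul_exp_neg_mul_rpow (by linarith) one_pos (by linarith)
    · filter_upwards with x z hz
      have : HasDerivAt (fun z : ℂ => -z * x) (-1 * x) z := ((hasDerivAt_id z).neg).mul_const _
      exact (this.cexp).const_mul _
  have d2 : DifferentiableOn ℂ f2 U := by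
    intro w hw
    refine DifferentiableAt.differentiableWithinAt ?_
    refine DifferentiableAt.const_mul ?_ _
    exact (differentiableAt_id).cpow_const (Or.inl hw)
  have key : Set.EqOn f1 f2 U := by
    refine (d1.analyticOnNhd hUo).eqOn_of_preconnected_of_frequently_eq (d2.analyticOnNhd hUo)
      hUc.isPreconnected (z₀ := 1) (by simp [hU]) ?_
    have hreal : ∀ r : ℝ, 0 < r → f1 r = f2 r := by
      intro r hr
      have h := Complex.integral_cpow_mul_exp_neg_mul_Ioi (a := ((1 + p : ℝ) : ℂ)) (r := r)
        (by rw [Complex.ofReal_re]; linarith) hr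
      simp only [f1, f2]
      rw [Complex.Gamma_ofReal] at h
      rw [mul_comm (Real.Gamma (1 + p) : ℂ)]
      convert h using 1
      · refine setIntegral_congr_fun measurableSet_Ioi fun x hx => ?_
        have hx : (0:ℝ) < x := hx
        rw [Complex.ofReal_cpow hx.le]
        congr 2
        · push_cast; ring
        · ring
      · congr 1
        rw [one_div, Complex.cpow_neg, Complex.inv_cpow]
        rw [Complex.arg_ofReal_of_nonneg hr.le]; exact pi_pos.ne
    have ht : Filter.Tendsto (fun n : ℕ => (((1 + 1 / ((n:ℝ) + 1)) : ℝ) : ℂ)) Filter.atTop (nhdsWithin 1 {1}ᶜ) := by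
      rw [tendsto_nhdsWithin_iff]
      constructor
      · have := (tendsto_one_div_add_atTop_nhds_zero_nat (𝕜 := ℝ)).const_add 1
        rw [add_zero] at this
        exact_mod_cast (Complex.continuous_ofReal.tendsto 1).comp this
      · filter_upwards with n
        simp only [Set.mem_compl_iff, Set.mem_singleton_iff]
        intro h
        have h : (1 + 1 / ((n:ℝ) + 1)) = 1 := by exact_mod_cast h
        have : 0 < 1 / ((n:ℝ) + 1) := by positivity
        linarith
    refine ht.frequently (Filter.Frequently.of_forall fun n => ?_)
    exact hreal _ (by positivity)
  exact key hz

theorem norm_le_add (b : ℝ) (w : ℂ) (hb : 0 ≤ b) (hw : 0 ≤ w.re) : ‖w‖ ≤ ‖(b : ℂ) + w‖ := by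
  rw [← sq_le_sq₀ (norm_nonneg _) (norm_nonneg _), Complex.sq_norm, Complex.sq_norm,
    Complex.normSq_apply, Complex.normSq_apply]
  simp
  nlinarith [mul_nonneg hb hw]

theorem norm_le_add' (b : ℝ) (w : ℂ) (hw : 0 ≤ w.re) : b ≤ ‖(b : ℂ) + w‖ := by
  refine le_trans ?_ (Complex.re_le_norm _)
  simpa using hw

theorem norm_line_lower (σ τ : ℝ) (hσ : 0 < σ) :
    min σ 1 / 2 * (1 + |τ|) ≤ ‖(σ : ℂ) + τ * Complex.I‖ := by
  have h1 : |σ| ≤ ‖(σ : ℂ) + τ * Complex.I‖ := by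
    simpa using Complex.abs_re_le_norm ((σ : ℂ) + τ * Complex.I)
  have h2 : |τ| ≤ ‖(σ : ℂ) + τ * Complex.I‖ := by
    simpa using Complex.abs_im_le_norm ((σ : ℂ) + τ * Complex.I)
  rw [abs_of_pos hσ] at h1
  have h3 := min_le_left σ 1
  have h4 := min_le_right σ 1
  have h5 : 0 < min σ 1 := by positivity
  nlinarith [abs_nonneg τ]

theorem line_ne (σ τ : ℝ) (hσ : 0 < σ) : (σ : ℂ) + τ * Complex.I ≠ 0 := by
  intro h
  have := congrArg Complex.re h
  simp at this
  linarith

theorem line_int (p σ : ℝ) (hp : 0 < p) (hσ : 0 < σ) :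
    Integrable (fun τ : ℝ => ‖(σ : ℂ) + τ * Complex.I‖ ^ (-(1 + p))) := by
  have h := integrable_one_add_norm (E := ℝ) (μ := volume) (r := 1 + p) (by simp; linarith)
  refine (h.const_mul ((min σ 1 / 2) ^ (-(1 + p)))).mono' ?_ ?_
  · exact Measurable.aestronglyMeasurable (by fun_prop)
  · filter_upwards with τ
    have hm : 0 < min σ 1 := by positivity
    rw [Real.norm_of_nonneg (by positivity), ← mul_rpow (by positivity) (by positivity)]
    exact rpow_le_rpow_of_nonpos (by positivity) (norm_line_lower σ τ hσ) (by linarith)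

theorem half_shift (σ u : ℝ) (h : ℝ → ℝ) (g : ℝ → ℂ)
    (H : (∫ τ in Set.Ioi (0:ℝ), Complex.exp ((u * τ : ℝ) * Complex.I) * g τ).re = π * h u) :
    (∫ τ in Set.Ioi (0:ℝ), Complex.exp (u * ((σ : ℂ) + τ * Complex.I)) * g τ).re
      = π * (Real.exp (σ * u) * h u) := by
  have : ∀ τ : ℝ, Complex.exp (u * ((σ : ℂ) + τ * Complex.I)) * g τ
      = (Real.exp (σ * u) : ℝ) * (Complex.exp ((u * τ : ℝ) * Complex.I) * g τ) := by
    intro τ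
    rw [Complex.ofReal_exp, ← mul_assoc, ← Complex.exp_add]
    congr 2; push_cast; ring
  simp_rw [this]
  rw [integral_const_mul, Complex.re_ofReal_mul, H]
  ring

theorem inv_power (p σ u : ℝ) (hp : 0 < p) (hσ : 0 < σ) (hu : 0 < u) :
    (∫ τ in Set.Ioi (0:ℝ), Complex.exp (u * ((σ : ℂ) + τ * Complex.I)) *
      ((σ : ℂ) + τ * Complex.I) ^ (-(1 + p : ℝ) : ℂ)).re = π * (u ^ p / Real.Gamma (1 + p)) := by
  have hΓ : 0 < Real.Gamma (1 + p) := Real.Gamma_pos_of_pos (by linarith)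
  have hsupp : ∀ F : ℝ → ℂ, ∀ x ∉ Set.Ioi (0:ℝ),
      F x * (((max x 0) ^ p * Real.exp (-σ * x) : ℝ) : ℂ) = 0 := by
    intro F x hx
    have hx : x ≤ 0 := not_lt.mp hx
    rw [max_eq_right hx, zero_rpow hp.ne']; simp
  have hsupp' : ∀ x ∉ Set.Ioi (0:ℝ), (((max x 0) ^ p * Real.exp (-σ * x) : ℝ)) = 0 := by
    intro x hx
    have hx : x ≤ 0 := not_lt.mp hx
    rw [max_eq_right hx, zero_rpow hp.ne']; simp
  have F := fourier_half (fun x => (max x 0) ^ p * Real.exp (-σ * x)) ?_ ?_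
    (fun τ => (Real.Gamma (1 + p) : ℂ) * ((σ : ℂ) + τ * Complex.I) ^ (-(1 + p : ℝ) : ℂ)) ?_ ?_ u
  · have := half_shift σ u (fun x => (max x 0) ^ p * Real.exp (-σ * x)) _ F
    have e : ∀ τ : ℝ, Complex.exp (u * ((σ : ℂ) + τ * Complex.I)) *
      ((σ : ℂ) + τ * Complex.I) ^ (-(1 + p : ℝ) : ℂ) = ((Real.Gamma (1 + p))⁻¹ : ℝ) *
      (Complex.exp (u * ((σ : ℂ) + τ * Complex.I)) * ((Real.Gamma (1 + p) : ℂ) *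
      ((σ : ℂ) + τ * Complex.I) ^ (-(1 + p : ℝ) : ℂ))) := by
      intro τ
      have : (Real.Gamma (1 + p) : ℂ) ≠ 0 := by exact_mod_cast hΓ.ne'
      rw [Complex.ofReal_inv]
      field_simp
    simp_rw [e]
    rw [integral_const_mul, Complex.re_ofReal_mul, this]
    rw [max_eq_left hu.le]
    have : Real.exp (σ * u) * Real.exp (-σ * u) = 1 := by
      rw [← Real.exp_add]; simp
    linear_combination (Real.Gamma (1 + p))⁻¹ * π * u ^ p * this
  · refine Continuous.mul ?_ (by fun_prop)
    exact (continuous_id.max continuous_const).rpow_const fun x => Or.inr hp.le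
  · rw [← integrableOn_iff_integrable_of_support_subset (s := Set.Ioi 0)]
    · refine (integrableOn_rpow_mul_exp_neg_mul_rpow (p := 1) (s := p) (b := σ) (by linarith) one_pos hσ).congr_fun ?_ measurableSet_Ioi
      intro x hx
      have hx : (0:ℝ) < x := hx
      simp [max_eq_left hx.le]
    · intro x hx
      by_contra h
      exact hx (hsupp' x h)
  · intro τ
    rw [← setIntegral_eq_integral_of_forall_compl_eq_zero (hsupp _),
      ← gammaC p hp.le ((σ : ℂ) + τ * Complex.I) (by simpa using hσ)]
    refine setIntegral_congr_fun measurableSet_Ioi fun x hx => ?_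
    have hx : (0:ℝ) < x := hx
    simp only [max_eq_left hx.le]
    push_cast
    rw [mul_left_comm, ← Complex.exp_add]
    congr 2; ring
  · refine ((line_int p σ hp hσ).const_mul (Real.Gamma (1 + p))).mono' ?_ ?_
    · exact Measurable.aestronglyMeasurable (by fun_prop)
    · filter_upwards with τ
      rw [norm_mul, Complex.norm_real, Real.norm_of_nonneg hΓ.le,
        show (-(1 + p : ℝ) : ℂ) = ((-(1 + p) : ℝ) : ℂ) by push_cast; ring, Complex.norm_cpow_real]

theorem expC (z : ℂ) (hz : 0 < z.re) :
    ∫ x in Set.Ioi (0:ℝ), Complex.exp (-z * x) = 1 / z := by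
  rw [integral_exp_mul_complex_Ioi (by simpa using hz)]
  simp

theorem inv_rat (σ u : ℝ) (hσ : 0 < σ) (hu : 0 < u) :
    (∫ τ in Set.Ioi (0:ℝ), Complex.exp (u * ((σ : ℂ) + τ * Complex.I)) *
      (1 / (((σ : ℂ) + τ * Complex.I) * (1 + ((σ : ℂ) + τ * Complex.I))))).re
      = π * (1 - Real.exp (-u)) := by
  have hsupp' : ∀ x ∉ Set.Ioi (0:ℝ), (1 - Real.exp (-max x 0)) * Real.exp (-σ * x) = 0 := by
    intro x hx
    have hx : x ≤ 0 := not_lt.mp hx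
    rw [max_eq_right hx]; simp
  have F := fourier_half (fun x => (1 - Real.exp (-max x 0)) * Real.exp (-σ * x)) ?_ ?_
    (fun τ => 1 / (((σ : ℂ) + τ * Complex.I) * (1 + ((σ : ℂ) + τ * Complex.I)))) ?_ ?_ u
  · have := half_shift σ u (fun x => (1 - Real.exp (-max x 0)) * Real.exp (-σ * x)) _ F
    rw [this]
    rw [max_eq_left hu.le]
    have : Real.exp (σ * u) * Real.exp (-σ * u) = 1 := by
      rw [← Real.exp_add]; simp
    linear_combination π * (1 - Real.exp (-u)) * this
  · fun_prop
  · rw [← integrableOn_iff_integrable_of_support_subset (s := Set.Ioi 0)]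
    · refine ((integrableOn_exp_mul_Ioi (a := -σ) (by linarith) 0).sub
        (integrableOn_exp_mul_Ioi (a := -(1 + σ)) (by linarith) 0)).congr_fun ?_ measurableSet_Ioi
      intro x hx
      have hx : (0:ℝ) < x := hx
      simp only [max_eq_left hx.le, Pi.sub_apply]
      rw [sub_mul, ← Real.exp_add, one_mul]
      congr 2; ring
    · intro x hx
      by_contra h
      exact hx (hsupp' x h)
  · intro τ
    set z := (σ : ℂ) + τ * Complex.I with hzdef
    have hz : 0 < z.re := by simpa [hzdef] using hσ
    have hz1 : 0 < (1 + z).re := by simp; linarith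
    have hz0 : z ≠ 0 := by intro h; simp [h] at hz
    have hz10 : 1 + z ≠ 0 := by intro h; simp [h] at hz1
    have : 1 / (z * (1 + z)) = 1 / z - 1 / (1 + z) := by field_simp; ring
    rw [this, ← expC z hz, ← expC (1 + z) hz1, ← integral_sub
      (integrableOn_exp_mul_complex_Ioi (by simpa using hz) 0)
      (integrableOn_exp_mul_complex_Ioi (a := -(1 + z)) (by simp only [Complex.neg_re]; linarith) 0),
      ← setIntegral_eq_integral_of_forall_compl_eq_zero (s := Set.Ioi 0)]
    · refine setIntegral_congr_fun measurableSet_Ioi fun x hx => ?_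
      have hx : (0:ℝ) < x := hx
      simp only [max_eq_left hx.le]
      push_cast
      rw [sub_mul, mul_sub, ← Complex.exp_add, ← Complex.exp_add, one_mul, ← Complex.exp_add]
      congr 2
      · rw [hzdef]; ring
      · rw [hzdef]; ring
    · intro x hx
      rw [hsupp' x hx]; simp
  · refine ((line_int 1 σ one_pos hσ)).mono' ?_ ?_
    · exact Measurable.aestronglyMeasurable (by fun_prop)
    · filter_upwards with τ
      set z := (σ : ℂ) + τ * Complex.I with hzdef
      have hz : 0 < ‖z‖ := norm_pos_iff.mpr (line_ne σ τ hσ)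
      have hz' : 0 ≤ z.re := by simpa [hzdef] using hσ.le
      have h1 : ‖z‖ ≤ ‖1 + z‖ := by
        simpa using norm_le_add 1 z zero_le_one hz'
      rw [norm_div, norm_mul, norm_one, show (-(1 + 1) : ℝ) = -2 by norm_num, rpow_neg hz.le, one_div,
        rpow_two]
      gcongr
      nlinarith

theorem inv_two (δ u : ℝ) (hδ : 0 < δ) (hδ1 : δ ≤ 1) (hu : 0 < u) :
    (∫ τ in Set.Ioi (0:ℝ), Complex.exp ((u * τ : ℝ) * Complex.I) *
      (1 / (((δ : ℂ) - τ * Complex.I) * (1 + τ * Complex.I)))).re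
      = π * (Real.exp (-u) / (1 + δ)) := by
  have F := fourier_half (fun x => Real.exp (-max x 0) * Real.exp (δ * min x 0) / (1 + δ)) ?_ ?_
    (fun τ => 1 / (((δ : ℂ) - τ * Complex.I) * (1 + τ * Complex.I))) ?_ ?_ u
  · rw [F]
    rw [max_eq_left hu.le, min_eq_right hu.le]
    simp
  · fun_prop
  · refine Integrable.div_const ?_ _
    rw [← integrableOn_univ, ← Set.Iic_union_Ioi (a := (0:ℝ)), integrableOn_union]
    constructor
    · refine (integrableOn_exp_mul_Iic (a := δ) hδ 0).congr_fun ?_ measurableSet_Iic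
      intro x hx
      have hx : x ≤ 0 := hx
      simp [max_eq_right hx, min_eq_left hx]
    · refine (integrableOn_exp_mul_Ioi (a := -1) (by norm_num) 0).congr_fun ?_ measurableSet_Ioi
      intro x hx
      have hx : 0 < x := hx
      simp [max_eq_left hx.le, min_eq_right hx.le]
  · intro τ
    have h1 : (1 + τ * Complex.I) ≠ 0 := by simpa using line_ne 1 τ one_pos
    have h2 : (δ - τ * Complex.I) ≠ 0 := by
      have := line_ne δ (-τ) hδ
      intro h; apply this; rw [← h]; push_cast; ring
    have h3 : (1 + δ : ℂ) ≠ 0 := by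
      have : (1 + δ : ℝ) ≠ 0 := by positivity
      exact_mod_cast this
    have e : 1 / (((δ : ℂ) - τ * Complex.I) * (1 + τ * Complex.I))
      = (1 / (δ - τ * Complex.I) + 1 / (1 + τ * Complex.I)) / (1 + δ) := by
      field_simp; ring
    have i1 : ∫ x in Set.Iic (0:ℝ), Complex.exp ((δ - τ * Complex.I) * x) = 1 / (δ - τ * Complex.I) := by
      rw [integral_exp_mul_complex_Iic (by simpa using hδ)]; simp
    have I1 := integrableOn_exp_mul_complex_Iic (a := (δ - τ * Complex.I)) (by simpa using hδ) 0
    have I2 := integrableOn_exp_mul_complex_Ioi (a := -(1 + τ * Complex.I)) (by simp) 0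
    rw [e, ← i1, ← expC (1 + τ * Complex.I) (by simp)]
    have E1 : ∀ x ∈ Set.Iic (0:ℝ), Complex.exp ((δ - τ * Complex.I) * x) / (1 + δ) =
      Complex.exp (-(τ * x : ℝ) * Complex.I) * ((Real.exp (-max x 0) * Real.exp (δ * min x 0) / (1 + δ) : ℝ) : ℂ) := by
      intro x hx
      have hx : x ≤ 0 := hx
      rw [max_eq_right hx, min_eq_left hx]
      push_cast
      rw [neg_zero, Complex.exp_zero, one_mul, ← mul_div_assoc, ← Complex.exp_add]
      congr 2; ring
    have E2 : ∀ x ∈ Set.Ioi (0:ℝ), Complex.exp (-(1 + τ * Complex.I) * x) / (1 + δ) =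
      Complex.exp (-(τ * x : ℝ) * Complex.I) * ((Real.exp (-max x 0) * Real.exp (δ * min x 0) / (1 + δ) : ℝ) : ℂ) := by
      intro x hx
      have hx : 0 < x := hx
      rw [max_eq_left hx.le, min_eq_right hx.le]
      push_cast
      rw [mul_zero, Complex.exp_zero, mul_one, ← mul_div_assoc, ← Complex.exp_add]
      congr 2; ring
    rw [add_div, ← integral_div, ← integral_div, setIntegral_congr_fun measurableSet_Iic E1,
      setIntegral_congr_fun measurableSet_Ioi E2]
    rw [← setIntegral_univ, ← Set.Iic_union_Ioi (a := (0:ℝ)), setIntegral_union (Set.Iic_disjoint_Ioi le_rfl) measurableSet_Ioi]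
    · exact IntegrableOn.congr_fun (I1.div_const _) E1 measurableSet_Iic
    · exact IntegrableOn.congr_fun (I2.div_const _) E2 measurableSet_Ioi
  · refine ((line_int 1 δ one_pos hδ)).mono' ?_ ?_
    · exact Measurable.aestronglyMeasurable (by fun_prop)
    · filter_upwards with τ
      set z := (δ : ℂ) + τ * Complex.I with hzdef
      have hz : 0 < ‖z‖ := norm_pos_iff.mpr (line_ne δ τ hδ)
      have h1 : ‖z‖ ≤ ‖1 + τ * Complex.I‖ := by
        have := norm_le_add (1 - δ) z (by linarith) (by simpa [hzdef] using hδ.le)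
        convert this using 2
        rw [hzdef]; push_cast; ring
      have h2 : ‖δ - τ * Complex.I‖ = ‖z‖ := by
        rw [← Complex.norm_conj]; simp [hzdef]
      rw [norm_div, norm_mul, norm_one, show (-(1 + 1) : ℝ) = -2 by norm_num, rpow_neg hz.le, one_div,
        rpow_two, h2]
      gcongr
      nlinarith

theorem cpow_re_nonneg (ρ : ℝ) (z : ℂ) (hρ : 0 < ρ) (hρ1 : ρ < 1) (hz : 0 ≤ z.re) :
    0 ≤ (z ^ (ρ : ℂ)).re := by
  rw [Complex.cpow_ofReal_re]
  have h := Complex.abs_arg_le_pi_div_two_iff.mpr hz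
  have h2 := abs_le.mp h
  have hpi := pi_pos
  refine mul_nonneg (by positivity) (cos_nonneg_of_mem_Icc ⟨?_, ?_⟩)
  · nlinarith
  · nlinarith

theorem den_lower (ρ a : ℝ) (z : ℂ) (hρ : 0 < ρ) (hρ1 : ρ < 1) (ha : 0 < a) (hz : 0 ≤ z.re) :
    ‖z‖ ^ ρ ≤ ‖(a : ℂ) + z ^ (ρ : ℂ)‖ ∧ a ≤ ‖(a : ℂ) + z ^ (ρ : ℂ)‖ := by
  have h := cpow_re_nonneg ρ z hρ hρ1 hz
  refine ⟨?_, norm_le_add' a _ h⟩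
  rw [← Complex.norm_cpow_real]
  exact norm_le_add a _ ha.le h

theorem H_bound (ρ a : ℝ) (z : ℂ) (hρ : 0 < ρ) (hρ1 : ρ < 1) (ha : 0 < a) (hz : 0 < z.re) :
    ‖(a : ℂ) / (z * (a + z ^ (ρ : ℂ)))‖ ≤ a * ‖z‖ ^ (-(1 + ρ)) := by
  obtain ⟨h1, h2⟩ := den_lower ρ a z hρ hρ1 ha hz.le
  have hz0 : 0 < ‖z‖ := lt_of_lt_of_le hz (Complex.re_le_norm z)
  rw [norm_div, norm_mul, Complex.norm_real, Real.norm_of_nonneg ha.le, rpow_neg hz0.le,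
    rpow_add hz0, rpow_one, ← div_eq_mul_inv]
  gcongr

theorem F_deriv (ρ a u : ℝ) (z : ℂ) (hρ : 0 < ρ) (hρ1 : ρ < 1) (ha : 0 < a) (hz : 0 < z.re) :
    HasDerivAt (fun z : ℂ => Complex.exp (u * z) * ((a : ℂ) / (z * (a + z ^ (ρ : ℂ)))))
      (Complex.exp (u * z) * (u * ((a : ℂ) / (z * (a + z ^ (ρ : ℂ))))
        - a * (a + z ^ (ρ : ℂ) + ρ * z ^ (ρ : ℂ)) / (z * (a + z ^ (ρ : ℂ))) ^ 2)) z := by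
  have hz0 : z ≠ 0 := by intro h; simp [h] at hz
  have hd : (a : ℂ) + z ^ (ρ : ℂ) ≠ 0 := by
    rw [← norm_pos_iff]; exact lt_of_lt_of_le ha (den_lower ρ a z hρ hρ1 ha hz.le).2
  have d1 : HasDerivAt (fun z : ℂ => z ^ (ρ : ℂ)) (ρ * z ^ ((ρ : ℂ) - 1) * 1) z :=
    (hasDerivAt_id z).cpow_const (Or.inl hz)
  have d2 : HasDerivAt (fun z : ℂ => Complex.exp (u * z)) (Complex.exp (u * z) * (u * 1)) z :=
    ((hasDerivAt_id z).const_mul _).cexp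
  have d3 := (hasDerivAt_id z).mul (d1.const_add (a : ℂ))
  have d4 := (hasDerivAt_const z (a : ℂ)).div d3 (mul_ne_zero hz0 hd)
  refine (d2.mul d4).congr_deriv ?_
  have e : z ^ ((ρ : ℂ) - 1) = z ^ (ρ : ℂ) / z := by
    rw [Complex.cpow_sub _ _ hz0, Complex.cpow_one]
  simp only [e, id]
  simp
  field_simp
  ring

theorem F'_bound (ρ a u s : ℝ) (z : ℂ) (hρ : 0 < ρ) (hρ1 : ρ < 1) (ha : 0 < a) (hu : 0 < u)
    (hs : 0 < s) (hz : s ≤ z.re) :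
    ‖Complex.exp (u * z) * (u * ((a : ℂ) / (z * (a + z ^ (ρ : ℂ))))
        - a * (a + z ^ (ρ : ℂ) + ρ * z ^ (ρ : ℂ)) / (z * (a + z ^ (ρ : ℂ))) ^ 2)‖
      ≤ Real.exp (u * z.re) * ((u * a + 2 * a / s) * ‖z‖ ^ (-(1 + ρ))) := by
  have hz' : 0 < z.re := by linarith
  obtain ⟨h1, h2⟩ := den_lower ρ a z hρ hρ1 ha hz'.le
  have hz0 : s ≤ ‖z‖ := hz.trans (Complex.re_le_norm z)
  have hz1 : 0 < ‖z‖ := hs.trans_le hz0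
  rw [norm_mul, Complex.norm_exp]
  have : (u * z : ℂ).re = u * z.re := by simp
  rw [this, add_mul]
  gcongr
  refine (norm_sub_le _ _).trans (add_le_add ?_ ?_)
  · rw [norm_mul, Complex.norm_real, Real.norm_of_nonneg hu.le, mul_assoc]
    gcongr
    exact H_bound ρ a z hρ hρ1 ha hz'
  · set D := ‖(a : ℂ) + z ^ (ρ : ℂ)‖
    have hD : 0 < D := ha.trans_le h2
    have h3 : ‖(a : ℂ) + z ^ (ρ : ℂ) + ρ * z ^ (ρ : ℂ)‖ ≤ 2 * D := by
      refine (norm_add_le _ _).trans ?_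
      rw [norm_mul, Complex.norm_real, Real.norm_of_nonneg hρ.le, Complex.norm_cpow_real]
      have : 0 ≤ ‖z‖ ^ ρ := by positivity
      have : ‖(a : ℂ) + z ^ (ρ : ℂ)‖ = D := rfl
      nlinarith
    rw [norm_div, norm_mul, norm_pow, norm_mul, Complex.norm_real, Real.norm_of_nonneg ha.le,
      rpow_neg hz1.le, rpow_add hz1, rpow_one, ← div_eq_mul_inv]
    calc a * ‖(a : ℂ) + z ^ (ρ : ℂ) + ρ * z ^ (ρ : ℂ)‖ / (‖z‖ * D) ^ 2
        ≤ a * (2 * D) / (‖z‖ * D) ^ 2 := by gcongr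
      _ = (2 * a / ‖z‖) / (‖z‖ * D) := by field_simp
      _ ≤ (2 * a / s) / (‖z‖ * ‖z‖ ^ ρ) := by gcongr

theorem F_int (ρ a u σ : ℝ) (hρ : 0 < ρ) (hρ1 : ρ < 1) (ha : 0 < a) (hσ : 0 < σ) :
    Integrable (fun τ : ℝ => Complex.exp (u * ((σ : ℂ) + τ * Complex.I)) *
      ((a : ℂ) / (((σ : ℂ) + τ * Complex.I) * (a + ((σ : ℂ) + τ * Complex.I) ^ (ρ : ℂ))))) := by
  refine ((line_int ρ σ hρ hσ).const_mul (Real.exp (u * σ) * a)).mono' ?_ ?_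
  · exact Measurable.aestronglyMeasurable (by fun_prop)
  · filter_upwards with τ
    rw [norm_mul, Complex.norm_exp, mul_assoc]
    gcongr
    · simp
    · exact H_bound ρ a _ hρ hρ1 ha (by simpa using hσ)

theorem shift_deriv (ρ a u σ : ℝ) (hρ : 0 < ρ) (hρ1 : ρ < 1) (ha : 0 < a) (hu : 0 < u)
    (hσ : 0 < σ) :
    HasDerivAt (fun σ : ℝ => (∫ τ in Set.Ioi (0:ℝ), Complex.exp (u * ((σ : ℂ) + τ * Complex.I)) *
      ((a : ℂ) / (((σ : ℂ) + τ * Complex.I) * (a + ((σ : ℂ) + τ * Complex.I) ^ (ρ : ℂ))))).re)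
      0 σ := by
  set F : ℂ → ℂ := fun z : ℂ => Complex.exp (u * z) * ((a : ℂ) / (z * (a + z ^ (ρ : ℂ)))) with hF
  set F' : ℂ → ℂ := fun z => Complex.exp (u * z) * (u * ((a : ℂ) / (z * (a + z ^ (ρ : ℂ))))
        - a * (a + z ^ (ρ : ℂ) + ρ * z ^ (ρ : ℂ)) / (z * (a + z ^ (ρ : ℂ))) ^ 2) with hF'
  have hFd : ∀ z : ℂ, 0 < z.re → HasDerivAt F (F' z) z := fun z hz =>
    F_deriv ρ a u z hρ hρ1 ha hz
  have hs : Set.Ioo (σ / 2) (2 * σ) ∈ nhds σ := Ioo_mem_nhds (by linarith) (by linarith)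
  have key := hasDerivAt_integral_of_dominated_loc_of_deriv_le
    (μ := volume.restrict (Set.Ioi (0:ℝ)))
    (F := fun (σ : ℝ) (τ : ℝ) => F ((σ : ℂ) + τ * Complex.I))
    (F' := fun (σ : ℝ) (τ : ℝ) => F' ((σ : ℂ) + τ * Complex.I))
    (bound := fun τ => Real.exp (u * (2 * σ)) * ((u * a + 2 * a / (σ / 2)) *
      ‖((σ / 2 : ℝ) : ℂ) + τ * Complex.I‖ ^ (-(1 + ρ)))) hs ?_
      (F_int ρ a u σ hρ hρ1 ha hσ).integrableOn ?_ ?_ ?_ ?_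
  · obtain ⟨k1, k2⟩ := key
    have k3 : ∫ τ in Set.Ioi (0:ℝ), F' ((σ : ℂ) + τ * Complex.I) * Complex.I
        = 0 - F ((σ : ℂ) + (0:ℝ) * Complex.I) := by
      refine integral_Ioi_of_hasDerivAt_of_tendsto'
        (f := fun τ : ℝ => F ((σ : ℂ) + τ * Complex.I)) ?_ (k1.mul_const _) ?_
      · intro τ _
        have h1 : HasDerivAt (fun τ : ℝ => (σ : ℂ) + τ * Complex.I) (1 * Complex.I) τ :=
          ((Complex.ofRealCLM.hasDerivAt (x := τ)).mul_const Complex.I).const_add _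
        rw [one_mul] at h1
        exact (hFd ((σ : ℂ) + τ * Complex.I) (by simpa using hσ)).comp τ h1
      · rw [tendsto_zero_iff_norm_tendsto_zero]
        have hb : Filter.Tendsto (fun τ : ℝ => Real.exp (u * σ) * (a * τ ^ (-(1 + ρ))))
            Filter.atTop (nhds (Real.exp (u * σ) * (a * 0))) :=
          ((tendsto_rpow_neg_atTop (by linarith : 0 < 1 + ρ)).const_mul a).const_mul _
        rw [mul_zero, mul_zero] at hb
        refine squeeze_zero' (Filter.Eventually.of_forall fun _ => norm_nonneg _) ?_ hb
        filter_upwards [Filter.eventually_gt_atTop 0] with τ hτ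
        simp only [hF]
        rw [norm_mul, Complex.norm_exp]
        gcongr
        · simp
        · refine (H_bound ρ a _ hρ hρ1 ha (by simpa using hσ)).trans ?_
          have : τ ≤ ‖(σ : ℂ) + τ * Complex.I‖ := by
            simpa using Complex.im_le_norm ((σ : ℂ) + τ * Complex.I)
          gcongr ?_ * ?_
          exact rpow_le_rpow_of_nonpos hτ this (by linarith)
    have k4 : F ((σ : ℂ) + (0:ℝ) * Complex.I)
        = ((Real.exp (u * σ) * (a / (σ * (a + σ ^ ρ))) : ℝ) : ℂ) := by
      simp only [hF]
      push_cast
      rw [Complex.ofReal_cpow hσ.le]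
      simp
    have k5 : (∫ τ in Set.Ioi (0:ℝ), F' ((σ : ℂ) + τ * Complex.I)).re = 0 := by
      rw [integral_mul_const, k4] at k3
      have := congrArg Complex.im k3
      rw [Complex.mul_I_im, zero_sub, Complex.neg_im, Complex.ofReal_im, neg_zero] at this
      exact this
    have k6 := Complex.reCLM.hasFDerivAt.comp_hasDerivAt σ k2
    rw [Complex.reCLM_apply, k5] at k6
    exact k6
  · filter_upwards with s
    exact Measurable.aestronglyMeasurable (by simp only [hF]; fun_prop)
  · exact Measurable.aestronglyMeasurable (by simp only [hF']; fun_prop)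
  · filter_upwards with τ s hs
    have hs1 : σ / 2 < s := hs.1
    have hs2 : s < 2 * σ := hs.2
    refine (F'_bound ρ a u (σ / 2) _ hρ hρ1 ha hu (by linarith) (by simpa using hs1.le)).trans ?_
    have hpos : 0 < ‖((σ / 2 : ℝ) : ℂ) + τ * Complex.I‖ :=
      norm_pos_iff.mpr (line_ne (σ / 2) τ (by linarith))
    gcongr ?_ * (?_ * ?_)
    · simp; nlinarith
    · refine rpow_le_rpow_of_nonpos hpos ?_ (by linarith)
      have := norm_le_add (s - σ / 2) (((σ / 2 : ℝ) : ℂ) + τ * Complex.I) (by linarith) (by simp; linarith)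
      convert this using 2
      push_cast; ring
  · refine (((line_int ρ (σ / 2) hρ (by linarith)).const_mul _).const_mul _).integrableOn
  · filter_upwards with τ s hs
    have hs1 : σ / 2 < s := hs.1
    have h1 : HasDerivAt (fun s : ℝ => (s : ℂ) + τ * Complex.I) 1 s :=
      (Complex.ofRealCLM.hasDerivAt (x := s)).add_const _
    have := (hFd ((s : ℂ) + τ * Complex.I) (by simp; linarith)).comp s h1
    rwa [mul_one] at this

theorem shift_const (ρ a u : ℝ) (hρ : 0 < ρ) (hρ1 : ρ < 1) (ha : 0 < a) (hu : 0 < u)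
    (σ₁ σ₂ : ℝ) (h₁ : 0 < σ₁) (h₂ : 0 < σ₂) :
    (∫ τ in Set.Ioi (0:ℝ), Complex.exp (u * ((σ₁ : ℂ) + τ * Complex.I)) *
      ((a : ℂ) / (((σ₁ : ℂ) + τ * Complex.I) * (a + ((σ₁ : ℂ) + τ * Complex.I) ^ (ρ : ℂ))))).re =
    (∫ τ in Set.Ioi (0:ℝ), Complex.exp (u * ((σ₂ : ℂ) + τ * Complex.I)) *
      ((a : ℂ) / (((σ₂ : ℂ) + τ * Complex.I) * (a + ((σ₂ : ℂ) + τ * Complex.I) ^ (ρ : ℂ))))).re := by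
  have hd := fun (σ : ℝ) (hσ : σ ∈ Set.Ioi (0:ℝ)) => shift_deriv ρ a u σ hρ hρ1 ha hu hσ
  exact isOpen_Ioi.is_const_of_deriv_eq_zero isPreconnected_Ioi
    (fun σ hσ => (hd σ hσ).differentiableAt.differentiableWithinAt)
    (fun σ hσ => (hd σ hσ).deriv) h₁ h₂

theorem series_line (ρ a u σ : ℝ) (hρ : 0 < ρ) (hρ1 : ρ < 1) (ha : 0 < a) (hu : 0 < u)
    (hσ : 0 < σ) (hσa : a < σ ^ ρ) :
    (∫ τ in Set.Ioi (0:ℝ), Complex.exp (u * ((σ : ℂ) + τ * Complex.I)) *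
      ((a : ℂ) / (((σ : ℂ) + τ * Complex.I) * (a + ((σ : ℂ) + τ * Complex.I) ^ (ρ : ℂ))))).re
      = π * (1 - ∑' n : ℕ, (-a) ^ n * u ^ (ρ * (n : ℝ)) / Real.Gamma (1 + ρ * (n : ℝ))) := by
  set F : ℕ → ℝ → ℂ := fun n τ => ((-(-a) ^ (n + 1) : ℝ) : ℂ) *
    (Complex.exp (u * ((σ : ℂ) + τ * Complex.I)) *
      ((σ : ℂ) + τ * Complex.I) ^ (-(1 + ρ * ((n + 1 : ℕ) : ℝ) : ℝ) : ℂ)) with hF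
  have hw : ∀ τ : ℝ, σ ^ ρ ≤ ‖(σ : ℂ) + τ * Complex.I‖ ^ ρ := by
    intro τ
    gcongr
    simpa using Complex.re_le_norm ((σ : ℂ) + τ * Complex.I)
  have hσρ : 0 < σ ^ ρ := by positivity
  have hnorm : ∀ n τ, ‖F n τ‖ ≤ (a / σ ^ ρ) ^ n * (a * Real.exp (u * σ) *
      ‖(σ : ℂ) + τ * Complex.I‖ ^ (-(1 + ρ))) := by
    intro n τ
    have hz : 0 < ‖(σ : ℂ) + τ * Complex.I‖ := norm_pos_iff.mpr (line_ne σ τ hσ)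
    simp only [hF]
    rw [norm_mul, norm_mul, Complex.norm_exp, Complex.norm_real, norm_neg, norm_pow, norm_neg,
      Real.norm_of_nonneg ha.le,
      show (-(1 + ρ * ((n + 1 : ℕ) : ℝ) : ℝ) : ℂ) = ((-(1 + ρ * ((n + 1 : ℕ) : ℝ)) : ℝ) : ℂ) by
        push_cast; ring, Complex.norm_cpow_real,
      show (-(1 + ρ * ((n + 1 : ℕ) : ℝ)) : ℝ) = -(1 + ρ) + -(ρ * n) by push_cast; ring,
      rpow_add hz, rpow_neg hz.le (ρ * n), rpow_mul hz.le, rpow_natCast]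
    have e : (u * ((σ : ℂ) + τ * Complex.I)).re = u * σ := by simp
    rw [e]
    have h2 : ((‖(σ : ℂ) + τ * Complex.I‖ ^ ρ) ^ n)⁻¹ ≤ ((σ ^ ρ) ^ n)⁻¹ := by
      exact inv_anti₀ (by positivity) (pow_le_pow_left₀ hσρ.le (hw τ) n)
    calc _ = (a ^ n * a * Real.exp (u * σ) * ‖(σ : ℂ) + τ * Complex.I‖ ^ (-(1 + ρ))) *
          ((‖(σ : ℂ) + τ * Complex.I‖ ^ ρ) ^ n)⁻¹ := by ring
      _ ≤ (a ^ n * a * Real.exp (u * σ) * ‖(σ : ℂ) + τ * Complex.I‖ ^ (-(1 + ρ))) *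
          ((σ ^ ρ) ^ n)⁻¹ := by gcongr
      _ = _ := by rw [div_pow]; ring
  have hLI := (line_int ρ σ hρ hσ).integrableOn (s := Set.Ioi 0)
  have hFi : ∀ n, Integrable (F n) (volume.restrict (Set.Ioi (0:ℝ))) := by
    intro n
    refine ((hLI.const_mul _).const_mul _).mono' ?_ (Filter.Eventually.of_forall (hnorm n))
    exact Measurable.aestronglyMeasurable (by simp only [hF]; fun_prop)
  have hr : a / σ ^ ρ < 1 := (div_lt_one hσρ).mpr hσa
  have hsum : Summable fun n => ∫ τ in Set.Ioi (0:ℝ), ‖F n τ‖ := by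
    refine Summable.of_nonneg_of_le (fun n => integral_nonneg fun _ => norm_nonneg _) (fun n => ?_)
      ((summable_geometric_of_lt_one (by positivity) hr).mul_right
        (∫ τ in Set.Ioi (0:ℝ), a * Real.exp (u * σ) * ‖(σ : ℂ) + τ * Complex.I‖ ^ (-(1 + ρ))))
    rw [← integral_const_mul]
    exact integral_mono (hFi n).norm ((hLI.const_mul _).const_mul _) (hnorm n)
  have hS := hasSum_integral_of_summable_integral_norm hFi hsum
  have hpt : ∀ τ : ℝ, ∑' n, F n τ = Complex.exp (u * ((σ : ℂ) + τ * Complex.I)) *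
      ((a : ℂ) / (((σ : ℂ) + τ * Complex.I) * (a + ((σ : ℂ) + τ * Complex.I) ^ (ρ : ℂ)))) := by
    intro τ
    have hz := line_ne σ τ hσ
    have hwn : ‖((σ : ℂ) + τ * Complex.I) ^ (ρ : ℂ)‖ = ‖(σ : ℂ) + τ * Complex.I‖ ^ ρ :=
      Complex.norm_cpow_real _ _
    have hd : (a : ℂ) + ((σ : ℂ) + τ * Complex.I) ^ (ρ : ℂ) ≠ 0 := by
      rw [← norm_pos_iff]
      exact lt_of_lt_of_le ha (den_lower ρ a _ hρ hρ1 ha (by simpa using hσ.le)).2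
    have hterm : ∀ n, F n τ = Complex.exp (u * ((σ : ℂ) + τ * Complex.I)) *
        (a / (((σ : ℂ) + τ * Complex.I) ^ (ρ : ℂ) * ((σ : ℂ) + τ * Complex.I))) *
        (-a / ((σ : ℂ) + τ * Complex.I) ^ (ρ : ℂ)) ^ n := by
      intro n
      simp only [hF]
      rw [show (-(1 + ρ * ((n + 1 : ℕ) : ℝ) : ℝ) : ℂ) = -(1 + (ρ : ℂ) + ρ * n) by push_cast; ring,
        Complex.cpow_neg, Complex.cpow_add _ _ hz, Complex.cpow_add _ _ hz, Complex.cpow_one,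
        Complex.cpow_mul_nat, div_pow]
      push_cast
      field_simp
      ring
    set z := (σ : ℂ) + τ * Complex.I
    set w := z ^ (ρ : ℂ) with hwdef
    have hw0 : w ≠ 0 := by
      rw [← norm_pos_iff, hwn]; exact hσρ.trans_le (hw τ)
    have hlt : ‖-(a : ℂ) / w‖ < 1 := by
      rw [norm_div, norm_neg, Complex.norm_real, Real.norm_of_nonneg ha.le, hwn, div_lt_one (hσρ.trans_le (hw τ))]
      exact hσa.trans_le (hw τ)
    simp_rw [hterm]
    rw [tsum_mul_left, tsum_geometric_of_norm_lt_one hlt, mul_assoc]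
    congr 1
    have : 1 - -(a : ℂ) / w = (a + w) / w := by field_simp; ring
    rw [this]
    field_simp
  simp_rw [hpt] at hS
  have hS2 := Complex.hasSum_re hS
  have hterm : ∀ n : ℕ, (∫ τ in Set.Ioi (0:ℝ), F n τ).re = -π * ((-a) ^ (n + 1) *
      u ^ (ρ * ((n + 1 : ℕ) : ℝ)) / Real.Gamma (1 + ρ * ((n + 1 : ℕ) : ℝ))) := by
    intro n
    simp only [hF]
    rw [integral_const_mul, Complex.re_ofReal_mul, inv_power _ σ u (by positivity) hσ hu]
    ring
  simp_rw [hterm] at hS2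
  set J := (∫ τ in Set.Ioi (0:ℝ), Complex.exp (u * ((σ : ℂ) + τ * Complex.I)) *
      ((a : ℂ) / (((σ : ℂ) + τ * Complex.I) * (a + ((σ : ℂ) + τ * Complex.I) ^ (ρ : ℂ))))).re
  have hS3 := hS2.mul_left (-π⁻¹)
  have hS4 : HasSum (fun n : ℕ => ((-a) ^ (n + 1) *
      u ^ (ρ * ((n + 1 : ℕ) : ℝ)) / Real.Gamma (1 + ρ * ((n + 1 : ℕ) : ℝ)))) (-π⁻¹ * J) := by
    have e : (fun i : ℕ => -π⁻¹ * (-π * ((-a) ^ (i + 1) *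
        u ^ (ρ * ((i + 1 : ℕ) : ℝ)) / Real.Gamma (1 + ρ * ((i + 1 : ℕ) : ℝ))))) =
        fun n : ℕ => ((-a) ^ (n + 1) *
      u ^ (ρ * ((n + 1 : ℕ) : ℝ)) / Real.Gamma (1 + ρ * ((n + 1 : ℕ) : ℝ))) := by
      ext n
      rw [← mul_assoc, neg_mul_neg, inv_mul_cancel₀ pi_pos.ne', one_mul]
    rw [e] at hS3
    exact hS3
  have hS5 := (hasSum_nat_add_iff (f := fun n : ℕ => ((-a) ^ n *
      u ^ (ρ * (n : ℝ)) / Real.Gamma (1 + ρ * (n : ℝ)))) 1).mp hS4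
  rw [hS5.tsum_eq]
  have := pi_pos.ne'
  simp

/-- dominating function -/
noncomputable def bd (ρ τ : ℝ) : ℝ := if τ ≤ 1 then τ ^ (ρ - 1) else τ ^ (-(1 + ρ))

theorem bd_int (ρ : ℝ) (hρ : 0 < ρ) : IntegrableOn (bd ρ) (Set.Ioi 0) := by
  rw [← Set.Ioc_union_Ioi_eq_Ioi (zero_le_one' ℝ), integrableOn_union]
  constructor
  · have h : IntegrableOn (fun x : ℝ => x ^ (ρ - 1)) (Set.Ioc 0 1) := by
      rw [← intervalIntegrable_iff_integrableOn_Ioc_of_le zero_le_one]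
      exact intervalIntegral.intervalIntegrable_rpow' (by linarith)
    refine h.congr_fun ?_ measurableSet_Ioc
    intro x hx
    simp [bd, hx.2]
  · refine (integrableOn_Ioi_rpow_of_lt (a := -(1 + ρ)) (by linarith) one_pos).congr_fun ?_ measurableSet_Ioi
    intro x hx
    have : ¬ x ≤ 1 := not_le.mpr hx
    simp [bd, this]

theorem N_bound (ρ a σ τ : ℝ) (hρ : 0 < ρ) (hρ1 : ρ < 1) (ha : 0 < a) (hσ : 0 ≤ σ) (hτ : 0 < τ) :
    ‖(a : ℂ) / (((σ : ℂ) + τ * Complex.I) * (a + ((σ : ℂ) + τ * Complex.I) ^ (ρ : ℂ)))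
      - 1 / (((σ : ℂ) + τ * Complex.I) * (1 + ((σ : ℂ) + τ * Complex.I)))‖
      ≤ (2 + a + a⁻¹) * bd ρ τ := by
  set z := (σ : ℂ) + τ * Complex.I with hz
  have hre : 0 ≤ z.re := by simpa [hz] using hσ
  have hzτ : τ ≤ ‖z‖ := by simpa [hz] using Complex.im_le_norm z
  have hzp : 0 < ‖z‖ := hτ.trans_le hzτ
  have hz0 : z ≠ 0 := norm_pos_iff.mp hzp
  obtain ⟨h1, h2⟩ := den_lower ρ a z hρ hρ1 ha hre
  have h3 : ‖z‖ ≤ ‖1 + z‖ := by simpa using norm_le_add 1 z zero_le_one hre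
  have h4 : 1 ≤ ‖1 + z‖ := by simpa using norm_le_add' 1 z hre
  have hd : (a : ℂ) + z ^ (ρ : ℂ) ≠ 0 := norm_pos_iff.mp (ha.trans_le h2)
  have hd1 : 1 + z ≠ 0 := norm_pos_iff.mp (hzp.trans_le h3)
  have e : (a : ℂ) / (z * (a + z ^ (ρ : ℂ))) - 1 / (z * (1 + z))
      = a / ((a + z ^ (ρ : ℂ)) * (1 + z)) - z ^ ((ρ : ℂ) - 1) / ((a + z ^ (ρ : ℂ)) * (1 + z)) := by
    rw [Complex.cpow_sub _ _ hz0, Complex.cpow_one]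
    field_simp
    ring
  rw [e]
  refine (norm_sub_le _ _).trans ?_
  rw [norm_div, norm_div, norm_mul, Complex.norm_real, Real.norm_of_nonneg ha.le,
    show ((ρ : ℂ) - 1) = ((ρ - 1 : ℝ) : ℂ) by push_cast; ring, Complex.norm_cpow_real]
  set D := ‖(a : ℂ) + z ^ (ρ : ℂ)‖
  have hD : 0 < D := ha.trans_le h2
  have hzr : ‖z‖ ^ (ρ - 1) ≤ τ ^ (ρ - 1) := rpow_le_rpow_of_nonpos hτ hzτ (by linarith)
  unfold bd
  split_ifs with h
  · have t1 : a / (D * ‖1 + z‖) ≤ 1 := by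
      rw [div_le_one (by positivity)]
      nlinarith
    have t2 : ‖z‖ ^ (ρ - 1) / (D * ‖1 + z‖) ≤ τ ^ (ρ - 1) / (a * 1) := by gcongr
    have t3 : 1 ≤ τ ^ (ρ - 1) := one_le_rpow_of_pos_of_le_one_of_nonpos hτ h (by linarith)
    have : τ ^ (ρ - 1) / (a * 1) = a⁻¹ * τ ^ (ρ - 1) := by rw [mul_one]; ring
    nlinarith
  · have h : 1 < τ := not_le.mp h
    have t1 : a / (D * ‖1 + z‖) ≤ a * τ ^ (-(1 + ρ)) := by
      rw [rpow_neg hτ.le, ← div_eq_mul_inv, rpow_add hτ, rpow_one, mul_comm τ]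
      have : τ ^ ρ ≤ ‖z‖ ^ ρ := by gcongr
      gcongr
      · exact this.trans h1
      · exact hzτ.trans h3
    have t2 : ‖z‖ ^ (ρ - 1) / (D * ‖1 + z‖) ≤ τ ^ (-(1 + ρ)) := by
      calc ‖z‖ ^ (ρ - 1) / (D * ‖1 + z‖) ≤ ‖z‖ ^ (ρ - 1) / (‖z‖ ^ ρ * ‖z‖) := by gcongr
        _ = ‖z‖ ^ (-(2:ℝ)) := by
          rw [← rpow_add_one hzp.ne', ← rpow_sub hzp]; congr 1; ring
        _ ≤ τ ^ (-(2:ℝ)) := rpow_le_rpow_of_nonpos hτ hzτ (by norm_num)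
        _ ≤ τ ^ (-(1 + ρ)) := rpow_le_rpow_of_exponent_le h.le (by linarith)
    have t3 : 0 < τ ^ (-(1 + ρ)) := by positivity
    have t4 : 0 < a⁻¹ * τ ^ (-(1 + ρ)) := by positivity
    nlinarith

theorem rhs_main (ρ a u : ℝ) (hρ : 0 < ρ) (hρ1 : ρ < 1) (ha : 0 < a) (hu : 0 < u) :
    (∫ τ in Set.Ioi (0:ℝ), Complex.exp (u * (τ * Complex.I)) *
      ((a : ℂ) / ((τ * Complex.I) * (a + (τ * Complex.I) ^ (ρ : ℂ)))
        - 1 / ((τ * Complex.I) * (1 + τ * Complex.I)))).re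
      = π * (Real.exp (-u) -
        ∑' n : ℕ, (-a) ^ n * u ^ (ρ * (n : ℝ)) / Real.Gamma (1 + ρ * (n : ℝ))) := by
  set G : ℝ → ℝ → ℂ := fun σ τ => Complex.exp (u * ((σ : ℂ) + τ * Complex.I)) *
      ((a : ℂ) / (((σ : ℂ) + τ * Complex.I) * (a + ((σ : ℂ) + τ * Complex.I) ^ (ρ : ℂ)))
        - 1 / (((σ : ℂ) + τ * Complex.I) * (1 + ((σ : ℂ) + τ * Complex.I)))) with hG
  set S := ∑' n : ℕ, (-a) ^ n * u ^ (ρ * (n : ℝ)) / Real.Gamma (1 + ρ * (n : ℝ)) with hS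
  have hlim : Filter.Tendsto (fun σ => ∫ τ in Set.Ioi (0:ℝ), G σ τ) (nhdsWithin 0 (Set.Ioi 0))
      (nhds (∫ τ in Set.Ioi (0:ℝ), G 0 τ)) := by
    refine tendsto_integral_filter_of_dominated_convergence
      (fun τ => Real.exp u * ((2 + a + a⁻¹) * bd ρ τ)) ?_ ?_ ?_ ?_
    · filter_upwards with σ
      exact Measurable.aestronglyMeasurable (by simp only [hG]; fun_prop)
    · filter_upwards [Ioo_mem_nhdsGT (zero_lt_one' ℝ)] with σ hσ
      filter_upwards [ae_restrict_mem measurableSet_Ioi] with τ hτ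
      simp only [hG]
      rw [norm_mul, Complex.norm_exp]
      gcongr
      · simp; nlinarith [hσ.2]
      · exact N_bound ρ a σ τ hρ hρ1 ha hσ.1.le hτ
    · exact ((bd_int ρ hρ).const_mul _).const_mul _
    · filter_upwards [ae_restrict_mem measurableSet_Ioi] with τ hτ
      have hτ : (0:ℝ) < τ := hτ
      have hc : ContinuousAt (fun z : ℂ => Complex.exp (u * z) *
        ((a : ℂ) / (z * (a + z ^ (ρ : ℂ))) - 1 / (z * (1 + z)))) (((0:ℝ) : ℂ) + τ * Complex.I) := by
        have hd := (den_lower ρ a (((0:ℝ) : ℂ) + τ * Complex.I) hρ hρ1 ha (by simp)).2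
        have h1 : (((0:ℝ) : ℂ) + τ * Complex.I) ≠ 0 := by simpa using hτ.ne'
        have h2 : (a : ℂ) + (((0:ℝ) : ℂ) + τ * Complex.I) ^ (ρ : ℂ) ≠ 0 :=
          norm_pos_iff.mp (ha.trans_le hd)
        have h3 : 1 + (((0:ℝ) : ℂ) + τ * Complex.I) ≠ 0 := by
          intro h; have := congrArg Complex.re h; simp at this
        have h4 : ContinuousAt (fun z : ℂ => z ^ (ρ : ℂ)) (((0:ℝ) : ℂ) + τ * Complex.I) :=
          continuousAt_cpow_const (Or.inr (by simpa using hτ.ne'))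
        refine ContinuousAt.mul (by fun_prop) (ContinuousAt.sub ?_ ?_)
        · exact continuousAt_const.div (continuousAt_id.mul (continuousAt_const.add h4)) (mul_ne_zero h1 h2)
        · exact continuousAt_const.div (by fun_prop) (mul_ne_zero h1 h3)
      have hc2 : ContinuousAt (fun σ : ℝ => (σ : ℂ) + τ * Complex.I) 0 := by fun_prop
      have := ContinuousAt.comp (f := fun σ : ℝ => (σ : ℂ) + τ * Complex.I) hc hc2
      exact this.tendsto.mono_left nhdsWithin_le_nhds
  have hlim2 := (Complex.continuous_re.tendsto _).comp hlim
  have hval : ∀ σ : ℝ, 0 < σ → (∫ τ in Set.Ioi (0:ℝ), G σ τ).re = π * (Real.exp (-u) - S) := by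
    intro σ hσ
    set σ' : ℝ := (a + 1) ^ (1 / ρ)
    have hσ' : 0 < σ' := by positivity
    have hσ'' : σ' ^ ρ = a + 1 := by
      rw [← rpow_mul (by positivity), one_div_mul_cancel hρ.ne', rpow_one]
    have e1 := series_line ρ a u σ' hρ hρ1 ha hu hσ' (by linarith)
    rw [shift_const ρ a u hρ hρ1 ha hu σ' σ hσ' hσ] at e1
    have e2 := inv_rat σ u hσ hu
    have I1 := (F_int ρ a u σ hρ hρ1 ha hσ).integrableOn (s := Set.Ioi 0)
    have I3 : IntegrableOn (G σ) (Set.Ioi 0) := by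
      refine (((bd_int ρ hρ).const_mul (2 + a + a⁻¹)).const_mul (Real.exp (u * σ))).mono' ?_ ?_
      · exact Measurable.aestronglyMeasurable (by simp only [hG]; fun_prop)
      · filter_upwards [ae_restrict_mem measurableSet_Ioi] with τ hτ
        simp only [hG]
        rw [norm_mul, Complex.norm_exp]
        gcongr
        · simp
        · exact N_bound ρ a σ τ hρ hρ1 ha hσ.le hτ
    have e3 : ∫ τ in Set.Ioi (0:ℝ), Complex.exp (u * ((σ : ℂ) + τ * Complex.I)) *
      (1 / (((σ : ℂ) + τ * Complex.I) * (1 + ((σ : ℂ) + τ * Complex.I)))) =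
      (∫ τ in Set.Ioi (0:ℝ), Complex.exp (u * ((σ : ℂ) + τ * Complex.I)) *
      ((a : ℂ) / (((σ : ℂ) + τ * Complex.I) * (a + ((σ : ℂ) + τ * Complex.I) ^ (ρ : ℂ)))))
      - ∫ τ in Set.Ioi (0:ℝ), G σ τ := by
      rw [← integral_sub I1 I3]
      congr 1; ext τ
      simp only [hG]; ring
    rw [e3, Complex.sub_re, e1] at e2
    linarith
  have hG0 : ∀ τ : ℝ, G 0 τ = Complex.exp (u * (τ * Complex.I)) *
      ((a : ℂ) / ((τ * Complex.I) * (a + (τ * Complex.I) ^ (ρ : ℂ)))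
        - 1 / ((τ * Complex.I) * (1 + τ * Complex.I))) := by
    intro τ; simp only [hG, Complex.ofReal_zero, zero_add]
  simp_rw [← hG0]
  refine tendsto_nhds_unique hlim2 ?_
  refine tendsto_const_nhds.congr' ?_
  filter_upwards [self_mem_nhdsWithin] with σ hσ
  exact (hval σ hσ).symm

theorem phi_norm (κ : ℂ) (α t : ℝ) (hκ : κ.re = 1) :
    ‖Complex.exp (-κ * ((t ^ α : ℝ) : ℂ))‖ = Real.exp (-t ^ α) := by
  rw [Complex.norm_exp]
  simp [hκ]

theorem eix_norm (x t : ℝ) : ‖Complex.exp (x * t * Complex.I)‖ = 1 := by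
  rw [show (x : ℂ) * t * Complex.I = ((x * t : ℝ) : ℂ) * Complex.I by push_cast; ring]
  exact Complex.norm_exp_ofReal_mul_I _

theorem dens_bound (α : ℝ) (κ : ℂ) (hα : 1 < α) (hκ : κ.re = 1) :
    ∃ C : ℝ, 0 ≤ C ∧ ∀ x : ℝ, 0 < x →
      |(∫ t in Set.Ioi (0:ℝ), Complex.exp (x * t * Complex.I) *
        Complex.exp (-κ * ((t ^ α : ℝ) : ℂ))).re| ≤ C / x ^ 2 := by
  have hα0 : 0 < α := by linarith
  set φ : ℝ → ℂ := fun t => Complex.exp (-κ * ((t ^ α : ℝ) : ℂ)) with hφ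
  set φ2 : ℝ → ℂ := fun t => (κ ^ 2 * α ^ 2 * ((t ^ (2 * α - 2) : ℝ) : ℂ)
    - κ * α * (α - 1) * ((t ^ (α - 2) : ℝ) : ℂ)) * φ t with hφ2
  have hφi : IntegrableOn (fun t : ℝ => Real.exp (-t ^ α)) (Set.Ioi 0) := by
    have := integrableOn_rpow_mul_exp_neg_rpow (p := α) (s := 0) (by norm_num) hα0
    simpa using this
  have hφ2i : IntegrableOn (fun t => ‖κ‖ ^ 2 * α ^ 2 * (t ^ (2 * α - 2) * Real.exp (-t ^ α))
      + ‖κ‖ * α * (α - 1) * (t ^ (α - 2) * Real.exp (-t ^ α))) (Set.Ioi 0) := by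
    refine Integrable.add ?_ ?_
    · exact (integrableOn_rpow_mul_exp_neg_rpow (p := α) (s := 2 * α - 2) (by linarith) hα0).const_mul _
    · exact (integrableOn_rpow_mul_exp_neg_rpow (p := α) (s := α - 2) (by linarith) hα0).const_mul _
  have hφ2n : ∀ t ∈ Set.Ioi (0:ℝ), ‖φ2 t‖ ≤ ‖κ‖ ^ 2 * α ^ 2 * (t ^ (2 * α - 2) * Real.exp (-t ^ α))
      + ‖κ‖ * α * (α - 1) * (t ^ (α - 2) * Real.exp (-t ^ α)) := by
    intro t ht
    have ht : 0 < t := ht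
    simp only [hφ2, hφ]
    rw [norm_mul, phi_norm κ α t hκ]
    refine (mul_le_mul_of_nonneg_right (norm_sub_le _ _) (by positivity)).trans (le_of_eq ?_)
    have e : ‖(α : ℂ) - 1‖ = α - 1 := by
      rw [show (α : ℂ) - 1 = ((α - 1 : ℝ) : ℂ) by push_cast; ring, Complex.norm_real,
        Real.norm_of_nonneg (by linarith)]
    simp only [norm_mul, norm_pow, Complex.norm_real, e, Real.norm_of_nonneg hα0.le,
      Real.norm_of_nonneg (rpow_nonneg ht.le _)]
    ring
  have hmeas : Measurable φ2 := by simp only [hφ2, hφ]; fun_prop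
  refine ⟨∫ t in Set.Ioi (0:ℝ), (‖κ‖ ^ 2 * α ^ 2 * (t ^ (2 * α - 2) * Real.exp (-t ^ α))
      + ‖κ‖ * α * (α - 1) * (t ^ (α - 2) * Real.exp (-t ^ α))), ?_, ?_⟩
  · refine setIntegral_nonneg measurableSet_Ioi fun t ht => (norm_nonneg _).trans (hφ2n t ht)
  intro x hx
  have hxI : (x : ℂ) * Complex.I ≠ 0 := by simp [hx.ne']
  set G : ℝ → ℂ := fun t => φ t * Complex.exp (x * t * Complex.I) / (x * Complex.I)
    + κ * α * ((t ^ (α - 1) : ℝ) : ℂ) * φ t * Complex.exp (x * t * Complex.I) / (x * Complex.I) ^ 2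
    with hG
  have hi1 : IntegrableOn (fun t : ℝ => Complex.exp (x * t * Complex.I) * φ t) (Set.Ioi 0) := by
    refine hφi.mono' (Measurable.aestronglyMeasurable (by simp only [hφ]; fun_prop)) ?_
    refine Filter.Eventually.of_forall fun t => ?_
    rw [norm_mul, eix_norm, one_mul, phi_norm κ α t hκ]
  have hwn : ∀ t : ℝ, ‖φ2 t * (Complex.exp (x * t * Complex.I) / (x * Complex.I) ^ 2)‖ =
      ‖φ2 t‖ / x ^ 2 := by
    intro t
    rw [norm_mul (φ2 t), norm_div, eix_norm, norm_pow, norm_mul (x : ℂ), Complex.norm_I, Complex.norm_real,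
      Real.norm_of_nonneg hx.le]
    ring
  have hi2 : IntegrableOn (fun t : ℝ => φ2 t * (Complex.exp (x * t * Complex.I) / (x * Complex.I) ^ 2))
      (Set.Ioi 0) := by
    refine (hφ2i.div_const (x ^ 2)).mono' (Measurable.aestronglyMeasurable (by fun_prop)) ?_
    refine (ae_restrict_iff' measurableSet_Ioi).mpr (Filter.Eventually.of_forall fun t ht => ?_)
    rw [hwn]
    exact div_le_div_of_nonneg_right (hφ2n t ht) (by positivity)
  have hd : ∀ t ∈ Set.Ioi (0:ℝ), HasDerivAt G (Complex.exp (x * t * Complex.I) * φ t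
      - φ2 t * (Complex.exp (x * t * Complex.I) / (x * Complex.I) ^ 2)) t := by
    intro t ht
    have ht : 0 < t := ht
    have h1 : HasDerivAt (fun t : ℝ => ((t ^ α : ℝ) : ℂ)) ((α * t ^ (α - 1) : ℝ) : ℂ) t :=
      (Real.hasDerivAt_rpow_const (Or.inl ht.ne')).ofReal_comp
    have h2 : HasDerivAt (fun t : ℝ => ((t ^ (α - 1) : ℝ) : ℂ))
        (((α - 1) * t ^ (α - 1 - 1) : ℝ) : ℂ) t :=
      (Real.hasDerivAt_rpow_const (Or.inl ht.ne')).ofReal_comp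
    have h3 : HasDerivAt φ (Complex.exp (-κ * ((t ^ α : ℝ) : ℂ)) *
        (-κ * ((α * t ^ (α - 1) : ℝ) : ℂ))) t := (h1.const_mul (-κ)).cexp
    have h4 : HasDerivAt (fun t : ℝ => Complex.exp (x * t * Complex.I))
        (Complex.exp (x * t * Complex.I) * (x * 1 * Complex.I)) t :=
      (((hasDerivAt_id t).ofReal_comp.const_mul (x : ℂ)).mul_const Complex.I).cexp
    have h5 := ((h3.mul h4).div_const (x * Complex.I)).add
      ((((h2.const_mul (κ * α)).mul h3).mul h4).div_const ((x * Complex.I) ^ 2))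
    refine (h5.congr_deriv ?_)
    have e1 : t ^ (2 * α - 2) = t ^ (α - 1) * t ^ (α - 1) := by
      rw [← rpow_add ht]; ring_nf
    have e2 : α - 1 - 1 = α - 2 := by ring
    have hx' : (x : ℂ) ≠ 0 := by exact_mod_cast hx.ne'
    simp only [hφ2, hφ, e1, e2, Pi.mul_apply]
    push_cast
    field_simp
    ring
  have hc : ContinuousWithinAt G (Set.Ici 0) 0 := by
    apply ContinuousAt.continuousWithinAt
    have k1 : ContinuousAt (fun t : ℝ => t ^ α) 0 := continuousAt_rpow_const _ _ (Or.inr hα0.le)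
    have k2 : ContinuousAt (fun t : ℝ => t ^ (α - 1)) 0 :=
      continuousAt_rpow_const _ _ (Or.inr (by linarith))
    have k1' := Complex.continuous_ofReal.continuousAt.comp k1
    have k2' := Complex.continuous_ofReal.continuousAt.comp k2
    have k3 : ContinuousAt φ 0 := (Complex.continuous_exp.continuousAt.comp
      (continuousAt_const.mul k1'))
    have k4 : ContinuousAt (fun t : ℝ => Complex.exp (x * t * Complex.I)) 0 := by fun_prop
    exact ((k3.mul k4).div_const _).add ((((continuousAt_const.mul k2').mul k3).mul k4).div_const _)
  have ht : Filter.Tendsto G Filter.atTop (nhds 0) := by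
    have l0 : Filter.Tendsto (fun t : ℝ => t ^ α) Filter.atTop Filter.atTop := tendsto_rpow_atTop hα0
    have l1 : Filter.Tendsto (fun t : ℝ => Real.exp (-t ^ α)) Filter.atTop (nhds 0) :=
      Real.tendsto_exp_neg_atTop_nhds_zero.comp l0
    have l2 : Filter.Tendsto (fun t : ℝ => t ^ (α - 1) * Real.exp (-t ^ α)) Filter.atTop (nhds 0) := by
      have := (tendsto_rpow_mul_exp_neg_mul_atTop_nhds_zero ((α - 1) / α) 1 one_pos).comp l0
      refine this.congr' ?_
      filter_upwards [Filter.eventually_gt_atTop 0] with t ht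
      simp only [Function.comp]
      rw [← rpow_mul ht.le, mul_div_cancel₀ _ hα0.ne', neg_one_mul]
    have l3 := (l1.div_const x).add ((l2.const_mul (‖κ‖ * α)).div_const (x ^ 2))
    simp only [zero_div, mul_zero, add_zero] at l3
    refine squeeze_zero_norm' ?_ l3
    filter_upwards [Filter.eventually_gt_atTop 0] with t ht
    refine (norm_add_le _ _).trans (le_of_eq ?_)
    simp only [norm_mul, norm_div, norm_pow, eix_norm, Complex.norm_I, Complex.norm_real, hφ,
      phi_norm κ α t hκ, Real.norm_of_nonneg hx.le, Real.norm_of_nonneg hα0.le,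
      Real.norm_of_nonneg (rpow_nonneg ht.le _)]
    ring
  have key := integral_Ioi_of_hasDerivAt_of_tendsto hc hd (hi1.sub hi2) ht
  have hG0 : G 0 = 1 / (x * Complex.I) := by
    simp [hG, hφ, Real.zero_rpow hα0.ne', Real.zero_rpow (show α - 1 ≠ 0 by linarith)]
  rw [integral_sub hi1 hi2, hG0] at key
  have key2 := congrArg Complex.re (sub_eq_iff_eq_add.mp key)
  have e0 : (0 - 1 / ((x : ℂ) * Complex.I)).re = 0 := by
    rw [show (0 - 1 / ((x : ℂ) * Complex.I)) = ((x⁻¹ : ℝ) : ℂ) * Complex.I by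
      push_cast
      have hx' : (x : ℂ) ≠ 0 := by exact_mod_cast hx.ne'
      field_simp
      simp]
    simp
  rw [Complex.add_re, e0, zero_add] at key2
  rw [key2]
  refine (Complex.abs_re_le_norm _).trans ((norm_integral_le_integral_norm _).trans ?_)
  simp_rw [hwn]
  rw [integral_div]
  refine div_le_div_of_nonneg_right ?_ (by positivity)
  refine setIntegral_mono_on ?_ hφ2i measurableSet_Ioi hφ2n
  refine (hφ2i.mono' hmeas.aestronglyMeasurable ?_).norm
  exact (ae_restrict_iff' measurableSet_Ioi).mpr (Filter.Eventually.of_forall hφ2n)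

theorem J_int (α x : ℝ) (κ : ℂ) (hα : 1 < α) (hκ : κ.re = 1) :
    IntegrableOn (fun t : ℝ => Complex.exp (x * t * Complex.I) *
        Complex.exp (-κ * ((t ^ α : ℝ) : ℂ))) (Set.Ioi 0) := by
  have hφi : IntegrableOn (fun t : ℝ => Real.exp (-t ^ α)) (Set.Ioi 0) := by
    have := integrableOn_rpow_mul_exp_neg_rpow (p := α) (s := 0) (by norm_num) (by linarith)
    simpa using this
  refine hφi.mono' (Measurable.aestronglyMeasurable (by fun_prop)) ?_
  refine Filter.Eventually.of_forall fun t => ?_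
  rw [norm_mul, eix_norm, one_mul, phi_norm κ α t hκ]

theorem inner_eq (α T p q : ℝ) (hα : 1 < α) :
    ∫ t in Set.Ioi (0:ℝ), Real.exp (-t ^ α) * Real.cos (t * p * q - t ^ α * T) =
    (∫ t in Set.Ioi (0:ℝ), Complex.exp ((p * q : ℝ) * t * Complex.I) *
        Complex.exp (-(1 + T * Complex.I) * ((t ^ α : ℝ) : ℂ))).re := by
  have h := J_int α (p * q) (1 + T * Complex.I) hα (by simp)
  have h2 := Complex.reCLM.integral_comp_comm h
  simp only [Complex.reCLM_apply] at h2
  rw [← h2]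
  congr 1
  ext t
  rw [← Complex.exp_add, Complex.exp_re]
  congr 2
  · simp
  · simp; ring

theorem J_le (α x : ℝ) (κ : ℂ) (hκ : κ.re = 1) :
    |(∫ t in Set.Ioi (0:ℝ), Complex.exp (x * t * Complex.I) *
        Complex.exp (-κ * ((t ^ α : ℝ) : ℂ))).re| ≤ ∫ t in Set.Ioi (0:ℝ), Real.exp (-t ^ α) := by
  refine (Complex.abs_re_le_norm _).trans ((norm_integral_le_integral_norm _).trans (le_of_eq ?_))
  congr 1
  ext t
  rw [norm_mul, eix_norm, one_mul, phi_norm κ α t hκ]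

/-- the complex inner integral -/
noncomputable def Jc (α : ℝ) (κ : ℂ) (x : ℝ) : ℂ :=
  ∫ t in Set.Ioi (0:ℝ), Complex.exp (x * t * Complex.I) * Complex.exp (-κ * ((t ^ α : ℝ) : ℂ))

/-- the outer integrand -/
noncomputable def Ls (α u c : ℝ) (κ : ℂ) (s : ℝ) : ℝ :=
  s ^ (-1 / α) * (Jc α κ (s ^ (-1 / α) * (u + c * s))).re

theorem Jc_meas (α : ℝ) (κ : ℂ) : Measurable (Jc α κ) := by
  unfold Jc
  refine StronglyMeasurable.measurable ?_
  refine StronglyMeasurable.integral_prod_right (f := fun (x : ℝ) (t : ℝ) =>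
    Complex.exp (x * t * Complex.I) * Complex.exp (-κ * ((t ^ α : ℝ) : ℂ))) ?_
  refine Measurable.stronglyMeasurable ?_
  simp only [Function.uncurry_def]
  fun_prop

theorem Ls_meas (α u c : ℝ) (κ : ℂ) : Measurable (Ls α u c κ) := by
  unfold Ls
  have := Jc_meas α κ
  fun_prop

theorem Ls_int (α u c : ℝ) (κ : ℂ) (hα : 1 < α) (hu : 0 < u) (hc : 0 < c) (hκ : κ.re = 1) :
    IntegrableOn (Ls α u c κ) (Set.Ioi 0) := by
  obtain ⟨C, hC, hCx⟩ := dens_bound α κ hα hκ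
  have hα0 : 0 < α := by linarith
  have hρ : 0 < 1 - 1 / α := by
    rw [sub_pos, div_lt_one hα0]; exact hα
  set K0 := ∫ t in Set.Ioi (0:ℝ), Real.exp (-t ^ α) with hK0
  have hK0p : 0 ≤ K0 := integral_nonneg fun t => (Real.exp_pos _).le
  refine ((bd_int _ hρ).const_mul (K0 + C / c ^ 2)).mono' (Ls_meas α u c κ).aestronglyMeasurable ?_
  refine (ae_restrict_iff' measurableSet_Ioi).mpr (Filter.Eventually.of_forall fun s hs => ?_)
  have hs : 0 < s := hs
  have hp : 0 < s ^ (-1 / α) := rpow_pos_of_pos hs _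
  unfold Ls
  rw [norm_mul, Real.norm_of_nonneg hp.le, Real.norm_eq_abs]
  unfold bd
  split_ifs with h1
  · have e : 1 - 1 / α - 1 = -1 / α := by ring
    rw [e]
    have := J_le α (s ^ (-1 / α) * (u + c * s)) κ hκ
    have h2 : 0 ≤ C / c ^ 2 := by positivity
    calc _ ≤ s ^ (-1 / α) * K0 := mul_le_mul_of_nonneg_left this hp.le
      _ ≤ s ^ (-1 / α) * (K0 + C / c ^ 2) := mul_le_mul_of_nonneg_left (by linarith) hp.le
      _ = _ := mul_comm _ _
  · have hx : 0 < s ^ (-1 / α) * (u + c * s) := by positivity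
    have := hCx _ hx
    have e : s ^ (-(1 + (1 - 1 / α))) = (s ^ (-1 / α))⁻¹ * (s ^ 2)⁻¹ := by
      rw [← rpow_neg hs.le, ← rpow_natCast, ← rpow_neg hs.le, ← rpow_add hs]
      congr 1
      push_cast
      ring
    rw [e]
    calc _ ≤ s ^ (-1 / α) * (C / (s ^ (-1 / α) * (u + c * s)) ^ 2) :=
          mul_le_mul_of_nonneg_left this hp.le
      _ ≤ s ^ (-1 / α) * (C / (s ^ (-1 / α) * (c * s)) ^ 2) := by
          gcongr
          linarith
      _ = C / c ^ 2 * ((s ^ (-1 / α))⁻¹ * (s ^ 2)⁻¹) := by field_simp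
      _ ≤ _ := by gcongr; linarith

theorem Ls_eq (α u c : ℝ) (κ : ℂ) (hα : 1 < α) (s : ℝ) (hs : 0 < s) :
    Ls α u c κ s = (∫ r in Set.Ioi (0:ℝ), Complex.exp ((u * r : ℝ) * Complex.I) *
      Complex.exp (-(κ * ((r ^ α : ℝ) : ℂ) - c * r * Complex.I) * s)).re := by
  have hα0 : 0 < α := by linarith
  have hb : 0 < s ^ (1 / α) := rpow_pos_of_pos hs _
  have hbinv : (s ^ (1 / α))⁻¹ = s ^ (-1 / α) := by rw [← rpow_neg hs.le]; congr 1; ring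
  set x := s ^ (-1 / α) * (u + c * s) with hx
  have h := integral_comp_mul_left_Ioi (fun t : ℝ => Complex.exp (x * t * Complex.I) *
        Complex.exp (-κ * ((t ^ α : ℝ) : ℂ))) 0 hb
  rw [mul_zero, hbinv] at h
  unfold Ls
  rw [← smul_eq_mul, ← Complex.smul_re, ← hx]
  unfold Jc
  rw [← h]
  congr 1
  refine setIntegral_congr_fun measurableSet_Ioi fun r hr => ?_
  have hr : 0 < r := hr
  have e1 : (s ^ (1 / α) * r) ^ α = s * r ^ α := by
    rw [mul_rpow hb.le hr.le, ← rpow_mul hs.le, one_div_mul_cancel hα0.ne', rpow_one]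
  have e2 : x * (s ^ (1 / α) * r) = (u + c * s) * r := by
    rw [hx, ← hbinv]; field_simp
  have e3 : (x : ℂ) * ((s ^ (1 / α) * r : ℝ) : ℂ) = (((u + c * s) * r : ℝ) : ℂ) := by
    rw [← e2]; push_cast; ring
  simp only [e1, e3]
  rw [← Complex.exp_add, ← Complex.exp_add]
  congr 1
  push_cast
  ring

theorem D_bounds (α c δ r : ℝ) (κ : ℂ) (hc : 0 < c) (hκ : κ.re = 1) (hκi : κ.im ≤ 0)
    (hδ : 0 ≤ δ) (hr : 0 < r) :
    r ^ α ≤ ‖(c * δ : ℂ) + κ * ((r ^ α : ℝ) : ℂ) - c * r * Complex.I‖ ∧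
    c * r ≤ ‖(c * δ : ℂ) + κ * ((r ^ α : ℝ) : ℂ) - c * r * Complex.I‖ := by
  have hp : 0 < r ^ α := rpow_pos_of_pos hr _
  constructor
  · refine le_trans ?_ (Complex.re_le_norm _)
    simp [hκ]
    positivity
  · refine le_trans ?_ (Complex.abs_im_le_norm _)
    refine le_trans ?_ (neg_le_abs _)
    simp
    nlinarith

theorem fubini_part (α u c δ : ℝ) (κ : ℂ) (hα : 1 < α) (hα2 : α < 2) (hc : 0 < c)
    (hκ : κ.re = 1) (hδ : 0 < δ) :
    ∫ s in Set.Ioi (0:ℝ), Real.exp (-(c * δ) * s) * Ls α u c κ s =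
    (∫ r in Set.Ioi (0:ℝ), Complex.exp ((u * r : ℝ) * Complex.I) *
      (1 / ((c * δ : ℂ) + κ * ((r ^ α : ℝ) : ℂ) - c * r * Complex.I))).re := by
  set D : ℝ → ℂ := fun r => (c * δ : ℂ) + κ * ((r ^ α : ℝ) : ℂ) - c * r * Complex.I with hD
  set f : ℝ → ℝ → ℂ := fun s r => Complex.exp ((u * r : ℝ) * Complex.I) *
    Complex.exp (-(D r) * s) with hf
  have hcd : 0 < c * δ := by positivity
  have hDre : ∀ r, (D r).re = c * δ + r ^ α := by
    intro r; simp [hD, hκ]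
  have hfn : ∀ s r, ‖f s r‖ = Real.exp (-(c * δ + r ^ α) * s) := by
    intro s r
    simp only [hf]
    rw [norm_mul, Complex.norm_exp_ofReal_mul_I, one_mul, Complex.norm_exp]
    congr 1
    rw [Complex.re_mul_ofReal, Complex.neg_re, hDre]
  have hmeas : Measurable (Function.uncurry f) := by
    simp only [Function.uncurry_def, hf, hD]
    fun_prop
  have hfint : Integrable (Function.uncurry f)
      ((volume.restrict (Set.Ioi (0:ℝ))).prod (volume.restrict (Set.Ioi (0:ℝ)))) := by
    rw [integrable_prod_iff' hmeas.aestronglyMeasurable]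
    constructor
    · refine (ae_restrict_iff' measurableSet_Ioi).mpr (Filter.Eventually.of_forall fun r hr => ?_)
      have hr : 0 < r := hr
      have hp : 0 < c * δ + r ^ α := by positivity
      refine (integrable_norm_iff ?_).mp ?_
      · exact (hmeas.comp (measurable_id.prodMk measurable_const)).aestronglyMeasurable
      · simp only [Function.uncurry_apply_pair, hfn]
        exact exp_neg_integrableOn_Ioi 0 hp
    · have e : ∀ r ∈ Set.Ioi (0:ℝ), (∫ s in Set.Ioi (0:ℝ), ‖Function.uncurry f (s, r)‖)
          = 1 / (c * δ + r ^ α) := by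
        intro r hr
        have hr : 0 < r := hr
        have hp : 0 < c * δ + r ^ α := by positivity
        simp only [Function.uncurry_apply_pair, hfn]
        rw [integral_exp_mul_Ioi (by linarith) 0]
        rw [mul_zero, Real.exp_zero, neg_div_neg_eq]
      have hb : IntegrableOn (fun r : ℝ => 1 / (c * δ + r ^ α)) (Set.Ioi 0) := by
        refine ((bd_int (α - 1) (by linarith)).const_mul (1 / (c * δ) + 1)).mono'
          (Measurable.aestronglyMeasurable (by fun_prop)) ?_
        refine (ae_restrict_iff' measurableSet_Ioi).mpr
          (Filter.Eventually.of_forall fun r hr => ?_)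
        have hr : 0 < r := hr
        have hra : 0 < r ^ α := rpow_pos_of_pos hr _
        rw [Real.norm_of_nonneg (by positivity)]
        unfold bd
        split_ifs with h1
        · have : 1 ≤ r ^ (α - 1 - 1) := one_le_rpow_of_pos_of_le_one_of_nonpos hr h1 (by linarith)
          calc 1 / (c * δ + r ^ α) ≤ 1 / (c * δ) := by gcongr; linarith
            _ ≤ (1 / (c * δ) + 1) * 1 := by linarith
            _ ≤ _ := by gcongr
        · have e : -(1 + (α - 1)) = -α := by ring
          rw [e, rpow_neg hr.le]
          calc 1 / (c * δ + r ^ α) ≤ 1 / r ^ α := by gcongr; linarith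
            _ = 1 * (r ^ α)⁻¹ := by ring
            _ ≤ _ := by
              gcongr
              have : 0 < 1 / (c * δ) := by positivity
              linarith
      exact hb.congr_fun (fun r hr => (e r hr).symm) measurableSet_Ioi
  have hsw := integral_integral_swap hfint
  have h1 : ∀ r ∈ Set.Ioi (0:ℝ), (∫ s in Set.Ioi (0:ℝ), f s r) =
      Complex.exp ((u * r : ℝ) * Complex.I) * (1 / D r) := by
    intro r hr
    have hr : 0 < r := hr
    simp only [hf]
    rw [integral_const_mul, expC (D r) (by rw [hDre]; positivity)]
  have h2 : ∀ s ∈ Set.Ioi (0:ℝ), Real.exp (-(c * δ) * s) * Ls α u c κ s =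
      (∫ r in Set.Ioi (0:ℝ), f s r).re := by
    intro s hs
    rw [Ls_eq α u c κ hα s hs, ← Complex.re_ofReal_mul, ← integral_const_mul]
    congr 2
    ext r
    simp only [hf, hD]
    rw [Complex.ofReal_exp, mul_left_comm, ← Complex.exp_add]
    congr 2
    push_cast
    ring
  rw [setIntegral_congr_fun measurableSet_Ioi h2]
  rw [setIntegral_congr_fun measurableSet_Ioi h1] at hsw
  rw [← hsw]
  have h3 := Complex.reCLM.integral_comp_comm hfint.integral_prod_left
  simp only [Complex.reCLM_apply] at h3
  exact h3

theorem E_bound (α c δ r : ℝ) (κ : ℂ) (hα : 1 < α) (hα2 : α < 2) (hc : 0 < c) (hκ : κ.re = 1)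
    (hκi : κ.im ≤ 0) (hδ : 0 ≤ δ) (hr : 0 < r) :
    ‖(c : ℂ) * (1 / ((c * δ : ℂ) + κ * ((r ^ α : ℝ) : ℂ) - c * r * Complex.I))
      - 1 / (((δ : ℂ) - r * Complex.I) * (1 + r * Complex.I))‖
      ≤ (1 + ‖κ‖ / c + c + ‖κ‖) * bd (α - 1) r := by
  obtain ⟨d1, d2⟩ := D_bounds α c δ r κ hc hκ hκi hδ hr
  set D := (c * δ : ℂ) + κ * ((r ^ α : ℝ) : ℂ) - c * r * Complex.I with hD
  set N := (δ : ℂ) - r * Complex.I with hN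
  set M := (1 : ℂ) + r * Complex.I with hM
  have hra : 0 < r ^ α := rpow_pos_of_pos hr _
  have hDp : 0 < ‖D‖ := hra.trans_le d1
  have hNr : r ≤ ‖N‖ := by
    refine le_trans ?_ (Complex.abs_im_le_norm _)
    refine le_trans ?_ (neg_le_abs _)
    simp [hN]
  have hM1 : 1 ≤ ‖M‖ := by
    refine le_trans ?_ (Complex.re_le_norm _)
    simp [hM]
  have hMr : r ≤ ‖M‖ := by
    refine le_trans ?_ (Complex.im_le_norm _)
    simp [hM]
  have hNp : 0 < ‖N‖ := hr.trans_le hNr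
  have hMp : 0 < ‖M‖ := hr.trans_le hMr
  have hD0 : D ≠ 0 := norm_pos_iff.mp hDp
  have hN0 : N ≠ 0 := norm_pos_iff.mp hNp
  have hM0 : M ≠ 0 := norm_pos_iff.mp hMp
  have key : (c : ℂ) * (1 / D) - 1 / (N * M) = c * (r * Complex.I) / (D * M)
      - κ * ((r ^ α : ℝ) : ℂ) / (D * N * M) := by
    field_simp
    rw [hD, hN, hM]
    ring
  rw [key]
  refine (norm_sub_le _ _).trans ?_
  simp only [norm_mul, norm_div, Complex.norm_I, Complex.norm_real, Real.norm_of_nonneg hc.le,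
    Real.norm_of_nonneg hr.le, Real.norm_of_nonneg hra.le, mul_one]
  have hκ0 := norm_nonneg κ
  unfold bd
  split_ifs with h1
  · have h2 : 1 ≤ r ^ (α - 1 - 1) := one_le_rpow_of_pos_of_le_one_of_nonpos hr h1 (by linarith)
    have e : r ^ α = r ^ (α - 1 - 1) * r ^ 2 := by
      rw [← rpow_natCast, ← rpow_add hr]; congr 1; push_cast; ring
    have t1 : c * r / (‖D‖ * ‖M‖) ≤ 1 := by
      rw [div_le_one (by positivity)]
      calc c * r = c * r * 1 := by ring
        _ ≤ _ := by gcongr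
    have t2 : ‖κ‖ * r ^ α / (‖D‖ * ‖N‖ * ‖M‖) ≤ ‖κ‖ / c * r ^ (α - 1 - 1) := by
      calc _ ≤ ‖κ‖ * r ^ α / ((c * r) * r * 1) := by gcongr
        _ = _ := by rw [e]; field_simp
    have : 0 ≤ ‖κ‖ / c := by positivity
    nlinarith
  · have e0 : -(1 + (α - 1)) = -α := by ring
    have h1' : 1 ≤ r := (not_le.mp h1).le
    have e2 : (r ^ 2)⁻¹ ≤ r ^ (-α) := by
      rw [← rpow_natCast, ← rpow_neg hr.le]
      exact rpow_le_rpow_of_exponent_le h1' (by push_cast; linarith)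
    rw [e0]
    have hn : 0 < r ^ (-α) := rpow_pos_of_pos hr _
    have t1 : c * r / (‖D‖ * ‖M‖) ≤ c * r ^ (-α) := by
      calc _ ≤ c * r / (r ^ α * r) := by gcongr
        _ = _ := by rw [rpow_neg hr.le]; field_simp
    have t2 : ‖κ‖ * r ^ α / (‖D‖ * ‖N‖ * ‖M‖) ≤ ‖κ‖ * r ^ (-α) := by
      calc _ ≤ ‖κ‖ * r ^ α / (r ^ α * r * r) := by gcongr
        _ = ‖κ‖ * (r ^ 2)⁻¹ := by field_simp
        _ ≤ _ := by gcongr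
    have : 0 ≤ ‖κ‖ / c * r ^ (-α) := by positivity
    nlinarith

theorem E_zero (α c r : ℝ) (hα : 1 < α) (hα2 : α < 2) (hc : 0 < c) (hr : 0 < r) :
    (c : ℂ) * (1 / ((c * (0:ℝ) : ℂ) + (1 + Real.tan (π * α / 2) * Complex.I) * ((r ^ α : ℝ) : ℂ)
        - c * r * Complex.I))
      - 1 / ((((0:ℝ) : ℂ) - r * Complex.I) * (1 + r * Complex.I)) =
    -((((c * Real.cos (π * (α - 2) / 2) : ℝ) : ℂ)) / ((r * Complex.I) *
      (((c * Real.cos (π * (α - 2) / 2) : ℝ) : ℂ) + (r * Complex.I) ^ ((α - 1 : ℝ) : ℂ)))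
      - 1 / ((r * Complex.I) * (1 + r * Complex.I))) := by
  have hcos : Real.cos (π * (α - 2) / 2) = -Real.cos (π * α / 2) := by
    rw [show π * (α - 2) / 2 = π * α / 2 - π by ring, Real.cos_sub_pi]
  have hpos : 0 < Real.cos (π * (α - 2) / 2) := by
    apply Real.cos_pos_of_mem_Ioo
    constructor <;> nlinarith [pi_pos]
  have hC0 : Real.cos (π * α / 2) ≠ 0 := by
    intro h; rw [hcos, h] at hpos; simp at hpos
  set C := Real.cos (π * α / 2) with hC
  have hr0 : (r : ℂ) ≠ 0 := by exact_mod_cast hr.ne'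
  have hI := Complex.I_ne_zero
  have hpow : (r * Complex.I) ^ ((α - 1 : ℝ) : ℂ) * (r * Complex.I) =
      ((r ^ α : ℝ) : ℂ) * (C * (1 + Real.tan (π * α / 2) * Complex.I)) := by
    have e1 : (r * Complex.I) ^ ((α - 1 : ℝ) : ℂ) * (r * Complex.I) = (r * Complex.I) ^ (α : ℂ) := by
      have hne : (r : ℂ) * Complex.I ≠ 0 := mul_ne_zero hr0 hI
      rw [show (α : ℂ) = ((α - 1 : ℝ) : ℂ) + 1 by push_cast; ring, Complex.cpow_add _ _ hne,
        Complex.cpow_one]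
    rw [e1, Complex.cpow_def_of_ne_zero (by simp [hr0]), Complex.log_ofReal_mul hr hI,
      Complex.log_I, add_mul, Complex.exp_add]
    congr 1
    · rw [rpow_def_of_pos hr]; push_cast; rfl
    · rw [show (π / 2 * Complex.I * α : ℂ) = ((π * α / 2 : ℝ) : ℂ) * Complex.I by push_cast; ring,
        Complex.exp_mul_I, ← Complex.ofReal_cos, ← Complex.ofReal_sin, ← hC,
        Real.tan_eq_sin_div_cos, ← hC]
      have : (C : ℂ) ≠ 0 := by exact_mod_cast hC0
      push_cast
      field_simp
  have hT : Real.tan (π * α / 2) ≤ 0 := by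
    rw [show π * α / 2 = (π * α / 2 - π) + π by ring, Real.tan_add_pi]
    apply Real.tan_nonpos_of_nonpos_of_neg_pi_div_two_le <;> nlinarith [pi_pos]
  have hDb := (D_bounds α c 0 r (1 + Real.tan (π * α / 2) * Complex.I) hc (by simp [-Complex.ofReal_tan])
    (by simpa [-Complex.ofReal_tan] using hT) le_rfl hr).1
  have hD0 : (c * (0:ℝ) : ℂ) + (1 + Real.tan (π * α / 2) * Complex.I) * ((r ^ α : ℝ) : ℂ)
        - c * r * Complex.I ≠ 0 := by
    rw [← norm_pos_iff]
    exact (rpow_pos_of_pos hr _).trans_le hDb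
  rw [hcos]
  set w := (r * Complex.I) ^ ((α - 1 : ℝ) : ℂ) with hw
  set D := (c * (0:ℝ) : ℂ) + (1 + Real.tan (π * α / 2) * Complex.I) * ((r ^ α : ℝ) : ℂ)
        - c * r * Complex.I with hD
  have hden : (r * Complex.I) * (((c * -C : ℝ) : ℂ) + w) = C * D := by
    rw [mul_add, mul_comm _ w, hpow, hD]
    push_cast
    ring
  rw [hden]
  have hCc : (C : ℂ) ≠ 0 := by exact_mod_cast hC0
  have h2 : ((c * -C : ℝ) : ℂ) / (C * D) = -(c * (1 / D)) := by
    push_cast; field_simp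
  rw [h2, Complex.ofReal_zero, zero_sub, neg_mul, div_neg]
  ring

theorem abel_lim (α u c : ℝ) (κ : ℂ) (hα : 1 < α) (hu : 0 < u) (hc : 0 < c) (hκ : κ.re = 1)
    (d : ℕ → ℝ) (hd : ∀ n, 0 < d n) (hd0 : Filter.Tendsto d Filter.atTop (nhds 0)) :
    Filter.Tendsto (fun n => ∫ s in Set.Ioi (0:ℝ), Real.exp (-(c * d n) * s) * Ls α u c κ s)
      Filter.atTop (nhds (∫ s in Set.Ioi (0:ℝ), Ls α u c κ s)) := by
  have hm := Ls_meas α u c κ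
  refine tendsto_integral_of_dominated_convergence (fun s => ‖Ls α u c κ s‖) ?_
    (Ls_int α u c κ hα hu hc hκ).norm ?_ ?_
  · intro n
    exact Measurable.aestronglyMeasurable (by fun_prop)
  · intro n
    refine (ae_restrict_iff' measurableSet_Ioi).mpr (Filter.Eventually.of_forall fun s hs => ?_)
    have hs : 0 < s := hs
    rw [norm_mul, Real.norm_of_nonneg (Real.exp_pos _).le]
    refine mul_le_of_le_one_left (norm_nonneg _) ?_
    rw [Real.exp_le_one_iff]
    have := hd n
    have : 0 < c * d n * s := by positivity
    linarith
  · refine Filter.Eventually.of_forall fun s => ?_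
    have h := ((hd0.const_mul c).neg.mul_const s).rexp.mul_const (Ls α u c κ s)
    simpa using h

theorem E_lim (α u c : ℝ) (κ : ℂ) (hα : 1 < α) (hα2 : α < 2) (hc : 0 < c) (hκ : κ.re = 1)
    (hκi : κ.im ≤ 0)
    (d : ℕ → ℝ) (hd : ∀ n, 0 < d n) (hd0 : Filter.Tendsto d Filter.atTop (nhds 0)) :
    Filter.Tendsto (fun n => ∫ r in Set.Ioi (0:ℝ), Complex.exp ((u * r : ℝ) * Complex.I) *
      ((c : ℂ) * (1 / ((c * d n : ℂ) + κ * ((r ^ α : ℝ) : ℂ) - c * r * Complex.I))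
      - 1 / (((d n : ℂ) - r * Complex.I) * (1 + r * Complex.I))))
      Filter.atTop (nhds (∫ r in Set.Ioi (0:ℝ), Complex.exp ((u * r : ℝ) * Complex.I) *
      ((c : ℂ) * (1 / ((c * (0:ℝ) : ℂ) + κ * ((r ^ α : ℝ) : ℂ) - c * r * Complex.I))
      - 1 / ((((0:ℝ) : ℂ) - r * Complex.I) * (1 + r * Complex.I))))) := by
  refine tendsto_integral_of_dominated_convergence
    (fun r => (1 + ‖κ‖ / c + c + ‖κ‖) * bd (α - 1) r) ?_
    ((bd_int (α - 1) (by linarith)).const_mul _) ?_ ?_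
  · intro n
    exact Measurable.aestronglyMeasurable (by fun_prop)
  · intro n
    refine (ae_restrict_iff' measurableSet_Ioi).mpr (Filter.Eventually.of_forall fun r hr => ?_)
    rw [norm_mul, Complex.norm_exp_ofReal_mul_I, one_mul]
    exact E_bound α c (d n) r κ hα hα2 hc hκ hκi (hd n).le hr
  · refine (ae_restrict_iff' measurableSet_Ioi).mpr (Filter.Eventually.of_forall fun r hr => ?_)
    have hr : 0 < r := hr
    have hdc : Filter.Tendsto (fun n => (d n : ℂ)) Filter.atTop (nhds ((0:ℝ) : ℂ)) :=
      (Complex.continuous_ofReal.tendsto 0).comp hd0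
    have hD0 : (c * (0:ℝ) : ℂ) + κ * ((r ^ α : ℝ) : ℂ) - c * r * Complex.I ≠ 0 := by
      rw [← norm_pos_iff]
      exact (rpow_pos_of_pos hr _).trans_le (D_bounds α c 0 r κ hc hκ hκi le_rfl hr).1
    have hN0 : (((0:ℝ) : ℂ) - r * Complex.I) * (1 + r * Complex.I) ≠ 0 := by
      refine mul_ne_zero ?_ ?_
      · simp [hr.ne']
      · intro h
        have := congrArg Complex.re h
        simp at this
    refine Filter.Tendsto.const_mul _ (Filter.Tendsto.sub (Filter.Tendsto.const_mul _ ?_) ?_)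
    · exact Filter.Tendsto.div tendsto_const_nhds (((hdc.const_mul _).add_const _).sub_const _) hD0
    · exact Filter.Tendsto.div tendsto_const_nhds ((hdc.sub_const _).mul_const _) hN0

theorem split_part (α u c δ : ℝ) (κ : ℂ) (hα : 1 < α) (hα2 : α < 2) (hu : 0 < u) (hc : 0 < c)
    (hκ : κ.re = 1) (hκi : κ.im ≤ 0) (hδ : 0 < δ) (hδ1 : δ ≤ 1) :
    c * (∫ s in Set.Ioi (0:ℝ), Real.exp (-(c * δ) * s) * Ls α u c κ s) =
    (∫ r in Set.Ioi (0:ℝ), Complex.exp ((u * r : ℝ) * Complex.I) *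
      ((c : ℂ) * (1 / ((c * δ : ℂ) + κ * ((r ^ α : ℝ) : ℂ) - c * r * Complex.I))
      - 1 / (((δ : ℂ) - r * Complex.I) * (1 + r * Complex.I)))).re
      + π * (Real.exp (-u) / (1 + δ)) := by
  rw [fubini_part α u c δ κ hα hα2 hc hκ hδ, ← inv_two δ u hδ hδ1 hu, ← Complex.re_ofReal_mul,
    ← Complex.add_re, ← integral_const_mul, ← integral_add]
  · congr 2
    ext r
    ring
  · refine ((bd_int (α - 1) (by linarith)).const_mul (1 + ‖κ‖ / c + c + ‖κ‖)).mono'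
      (Measurable.aestronglyMeasurable (by fun_prop)) ?_
    refine (ae_restrict_iff' measurableSet_Ioi).mpr (Filter.Eventually.of_forall fun r hr => ?_)
    rw [norm_mul, Complex.norm_exp_ofReal_mul_I, one_mul]
    exact E_bound α c δ r κ hα hα2 hc hκ hκi hδ.le hr
  · refine ((bd_int (α - 1) (by linarith)).const_mul (1 / δ + 1)).mono'
      (Measurable.aestronglyMeasurable (by fun_prop)) ?_
    refine (ae_restrict_iff' measurableSet_Ioi).mpr (Filter.Eventually.of_forall fun r hr => ?_)
    have hr : 0 < r := hr
    rw [norm_mul, Complex.norm_exp_ofReal_mul_I, one_mul, norm_div, norm_mul, norm_one]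
    have hNr : r ≤ ‖(δ : ℂ) - r * Complex.I‖ := by
      refine le_trans ?_ (Complex.abs_im_le_norm _)
      refine le_trans ?_ (neg_le_abs _)
      simp
    have hNd : δ ≤ ‖(δ : ℂ) - r * Complex.I‖ := by
      refine le_trans ?_ (Complex.re_le_norm _)
      simp
    have hM1 : 1 ≤ ‖(1 : ℂ) + r * Complex.I‖ := by
      refine le_trans ?_ (Complex.re_le_norm _)
      simp
    have hMr : r ≤ ‖(1 : ℂ) + r * Complex.I‖ := by
      refine le_trans ?_ (Complex.im_le_norm _)
      simp
    have hdi : 0 < 1 / δ := by positivity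
    unfold bd
    split_ifs with h1
    · have : 1 ≤ r ^ (α - 1 - 1) := one_le_rpow_of_pos_of_le_one_of_nonpos hr h1 (by linarith)
      calc _ ≤ 1 / (δ * 1) := by gcongr
        _ ≤ (1 / δ + 1) * 1 := by rw [mul_one]; linarith
        _ ≤ _ := by gcongr
    · have h1' : 1 ≤ r := (not_le.mp h1).le
      have e2 : (r ^ 2)⁻¹ ≤ r ^ (-(1 + (α - 1))) := by
        rw [← rpow_natCast, ← rpow_neg hr.le]
        exact rpow_le_rpow_of_exponent_le h1' (by push_cast; linarith)
      calc _ ≤ 1 / (r * r) := by gcongr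
        _ = 1 * (r ^ 2)⁻¹ := by rw [one_div, one_mul, sq]
        _ ≤ _ := by gcongr; linarith

/-- Infinite-horizon supremum distribution for a spectrally positive `α`-stable Lévy process with
drift `−c`: the integral of the density formula equals the Mittag-Leffler series
`Σ_{n=0}^∞ (−a)^n u^((α−1)n) / Γ(1 + (α−1)n)` with `a = c·cos(π(α−2)/2)`. -/
theorem stable_infinite_horizon_mittag_leffler (α u c : ℝ) (hα : α ∈ Set.Ioo (1 : ℝ) 2)
    (hu : 0 < u) (hc : 0 < c) :
    c / Real.pi *
      ∫ s in Set.Ioi (0 : ℝ), s ^ (-1 / α) *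
        ∫ t in Set.Ioi (0 : ℝ),
          Real.exp (-t ^ α) *
            Real.cos (t * s ^ (-1 / α) * (u + c * s) - t ^ α * Real.tan (Real.pi * α / 2)) =
    ∑' n : ℕ,
      (-(c * Real.cos (Real.pi * (α - 2) / 2))) ^ n * u ^ ((α - 1) * (n : ℝ)) /
        Real.Gamma (1 + (α - 1) * (n : ℝ)) := by
  obtain ⟨h1, h2⟩ := hα
  have hT : Real.tan (π * α / 2) ≤ 0 := by
    rw [show π * α / 2 = (π * α / 2 - π) + π by ring, Real.tan_add_pi]
    apply Real.tan_nonpos_of_nonpos_of_neg_pi_div_two_le <;> nlinarith [pi_pos]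
  have hapos : 0 < c * Real.cos (π * (α - 2) / 2) := by
    apply mul_pos hc
    apply Real.cos_pos_of_mem_Ioo
    constructor <;> nlinarith [pi_pos]
  have hE0 := fun r (hr : r ∈ Set.Ioi (0:ℝ)) => E_zero α c r h1 h2 hc hr
  set κ : ℂ := 1 + Real.tan (π * α / 2) * Complex.I with hκdef
  have hκ : κ.re = 1 := by simp [hκdef, -Complex.ofReal_tan]
  have hκi : κ.im ≤ 0 := by simpa [hκdef, -Complex.ofReal_tan] using hT
  have hL : (∫ s in Set.Ioi (0 : ℝ), s ^ (-1 / α) *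
        ∫ t in Set.Ioi (0 : ℝ),
          Real.exp (-t ^ α) *
            Real.cos (t * s ^ (-1 / α) * (u + c * s) - t ^ α * Real.tan (Real.pi * α / 2))) =
      ∫ s in Set.Ioi (0 : ℝ), Ls α u c κ s := by
    congr 1
    ext s
    rw [inner_eq α _ _ _ h1]
    rfl
  rw [hL]
  have hrhs := rhs_main (α - 1) _ u (by linarith) (by linarith) hapos hu
  set S := ∑' n : ℕ,
      (-(c * Real.cos (Real.pi * (α - 2) / 2))) ^ n * u ^ ((α - 1) * (n : ℝ)) /
        Real.Gamma (1 + (α - 1) * (n : ℝ)) with hS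
  set d : ℕ → ℝ := fun n => 1 / ((n : ℝ) + 1) with hd
  have hdp : ∀ n, 0 < d n := fun n => by simp only [hd]; positivity
  have hd1 : ∀ n, d n ≤ 1 := fun n => by
    simp only [hd]
    rw [div_le_one (by positivity)]
    have : (0:ℝ) ≤ n := Nat.cast_nonneg n
    linarith
  have hd0 : Filter.Tendsto d Filter.atTop (nhds 0) := tendsto_one_div_add_atTop_nhds_zero_nat
  have A := (abel_lim α u c κ h1 hu hc hκ d hdp hd0).const_mul c
  have Bl := (Complex.continuous_re.tendsto _).comp (E_lim α u c κ h1 h2 hc hκ hκi d hdp hd0)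
  have Cl : Filter.Tendsto (fun n => π * (Real.exp (-u) / (1 + d n))) Filter.atTop
      (nhds (π * (Real.exp (-u) / (1 + 0)))) :=
    (Filter.Tendsto.div tendsto_const_nhds (hd0.const_add 1) (by norm_num)).const_mul π
  have hlim := tendsto_nhds_unique A ((Bl.add Cl).congr fun n =>
    (split_part α u c (d n) κ h1 h2 hu hc hκ hκi (hdp n) (hd1 n)).symm)
  have hEint : (∫ r in Set.Ioi (0:ℝ), Complex.exp ((u * r : ℝ) * Complex.I) *
      ((c : ℂ) * (1 / ((c * (0:ℝ) : ℂ) + κ * ((r ^ α : ℝ) : ℂ) - c * r * Complex.I))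
      - 1 / ((((0:ℝ) : ℂ) - r * Complex.I) * (1 + r * Complex.I)))).re =
      -(π * (Real.exp (-u) - S)) := by
    rw [← hrhs, ← Complex.neg_re, ← integral_neg]
    congr 1
    refine setIntegral_congr_fun measurableSet_Ioi fun r hr => ?_
    rw [hE0 r hr, mul_neg]
    congr 3
    push_cast
    ring
  rw [hEint] at hlim
  rw [div_mul_eq_mul_div, hlim]
  have := pi_pos.ne'
  field_simp
  ring
end

section
/- For all real numbers z > 0 and c ≥ 0, one has ∫₀^∞ (z/t) · (2πt)^{-1/2} · exp(−(z − c·t)²/(2t)) dt = 1, where the integral is the Lebesgue integral over (0,∞). -/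
open MeasureTheory Real

open Filter Topology in
lemma kd_tendsto_top : Tendsto (fun x : ℝ => ∫ u in (0:ℝ)..x, Real.exp (-(1/2) * u ^ 2)) atTop
    (𝓝 (√(2 * π) / 2)) := by
  have h := intervalIntegral_tendsto_integral_Ioi (f := fun u : ℝ => Real.exp (-(1/2) * u ^ 2))
    (μ := volume) 0 (integrable_exp_neg_mul_sq (by norm_num : (0:ℝ) < 1/2)).integrableOn tendsto_id
  rw [integral_gaussian_Ioi] at h
  have e : π / (1 / 2) = 2 * π := by ring
  rw [e] at h
  exact h

lemma kd_odd (x : ℝ) : (∫ u in (0:ℝ)..(-x), Real.exp (-(1/2) * u ^ 2))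
    = - ∫ u in (0:ℝ)..x, Real.exp (-(1/2) * u ^ 2) := by
  have h := intervalIntegral.integral_comp_neg (a := 0) (b := x)
    (fun u : ℝ => Real.exp (-(1/2) * u ^ 2))
  simp only [neg_zero, even_two, Even.neg_pow] at h
  rw [h, intervalIntegral.integral_symm]

open Filter Topology in
lemma kd_tendsto_bot : Tendsto (fun x : ℝ => ∫ u in (0:ℝ)..x, Real.exp (-(1/2) * u ^ 2)) atBot
    (𝓝 (-(√(2 * π) / 2))) := by
  have h := (kd_tendsto_top.comp tendsto_neg_atBot_atTop).neg
  refine h.congr fun x => ?_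
  simp only [Function.comp, kd_odd, neg_neg]

lemma kd_deriv (x : ℝ) : HasDerivAt (fun x : ℝ => ∫ u in (0:ℝ)..x, Real.exp (-(1/2) * u ^ 2))
    (Real.exp (-(1/2) * x ^ 2)) x := by
  have hc : Continuous (fun u : ℝ => Real.exp (-(1/2) * u ^ 2)) := by fun_prop
  exact intervalIntegral.integral_hasDerivAt_right (hc.intervalIntegrable _ _)
    (hc.stronglyMeasurableAtFilter _ _) hc.continuousAt

lemma kd_deriv_arg (a b t : ℝ) (ht : 0 < t) :
    HasDerivAt (fun t : ℝ => a * √t + b * (√t)⁻¹) (a / (2 * √t) - b / (2 * t * √t)) t := by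
  have h := Real.hasDerivAt_sqrt ht.ne'
  have hs : 0 < √t := Real.sqrt_pos.2 ht
  have h2 := (h.const_mul a).add ((h.inv hs.ne').const_mul b)
  refine h2.congr_deriv ?_
  rw [Real.sq_sqrt ht.le]
  field_simp
  ring

noncomputable def kdF (z c t : ℝ) : ℝ :=
  ((∫ u in (0:ℝ)..(c * √t + (-z) * (√t)⁻¹), Real.exp (-(1/2) * u ^ 2))
    - Real.exp (2 * c * z) *
      ∫ u in (0:ℝ)..(c * √t + z * (√t)⁻¹), Real.exp (-(1/2) * u ^ 2)) / √(2 * π)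

lemma kdF_deriv (z c t : ℝ) (ht : 0 < t) :
    HasDerivAt (kdF z c) (z / t * ((2 * Real.pi * t) ^ (-(1 : ℝ) / 2) *
          Real.exp (-(z - c * t) ^ 2 / (2 * t)))) t := by
  have hs : 0 < √t := Real.sqrt_pos.2 ht
  have hp : 0 < √(2 * π) := Real.sqrt_pos.2 (by positivity)
  have h1 := (kd_deriv _).comp t (kd_deriv_arg c (-z) t ht)
  have h2 := (kd_deriv _).comp t (kd_deriv_arg c z t ht)
  have h := (h1.sub (h2.const_mul (Real.exp (2 * c * z)))).div_const (√(2 * π))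
  have e1 : Real.exp (-(1/2) * (c * √t + (-z) * (√t)⁻¹) ^ 2)
      = Real.exp (-(z - c * t) ^ 2 / (2 * t)) := by
    congr 1
    obtain ⟨s, hs', rfl⟩ : ∃ s : ℝ, 0 < s ∧ t = s ^ 2 := ⟨√t, hs, (Real.sq_sqrt ht.le).symm⟩
    rw [Real.sqrt_sq hs'.le]
    field_simp
    ring
  have e2 : Real.exp (2 * c * z) * Real.exp (-(1/2) * (c * √t + z * (√t)⁻¹) ^ 2)
      = Real.exp (-(z - c * t) ^ 2 / (2 * t)) := by
    rw [← Real.exp_add]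
    congr 1
    obtain ⟨s, hs', rfl⟩ : ∃ s : ℝ, 0 < s ∧ t = s ^ 2 := ⟨√t, hs, (Real.sq_sqrt ht.le).symm⟩
    rw [Real.sqrt_sq hs'.le]
    field_simp
    ring
  have e3 : (2 * Real.pi * t) ^ (-(1 : ℝ) / 2) = (√(2 * π) * √t)⁻¹ := by
    rw [← Real.sqrt_mul (by positivity), neg_div, Real.rpow_neg (by positivity),
      ← Real.sqrt_eq_rpow]
  refine h.congr_deriv ?_
  rw [← mul_assoc (Real.exp (2 * c * z)), e1, e2, e3]
  field_simp
  ring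

open Filter Topology in
lemma kd_sqrt_inv_zero : Tendsto (fun t : ℝ => (√t)⁻¹) (𝓝[>] 0) atTop := by
  refine tendsto_inv_nhdsGT_zero.comp (tendsto_nhdsWithin_iff.2 ⟨?_, ?_⟩)
  · have := (Real.continuous_sqrt.tendsto 0).mono_left (nhdsWithin_le_nhds (s := Set.Ioi 0))
    simpa using this
  · filter_upwards [self_mem_nhdsWithin] with t ht
    exact Real.sqrt_pos.2 ht

open Filter Topology in
lemma kdF_zero (z c : ℝ) (hz : 0 < z) : Tendsto (kdF z c) (𝓝[>] 0)
    (𝓝 ((-(√(2 * π) / 2) - Real.exp (2 * c * z) * (√(2 * π) / 2)) / √(2 * π))) := by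
  have h0 : Tendsto (fun t : ℝ => c * √t) (𝓝[>] 0) (𝓝 0) := by
    have : Continuous (fun t : ℝ => c * √t) := by fun_prop
    have := (this.tendsto 0).mono_left (nhdsWithin_le_nhds (s := Set.Ioi 0))
    simpa using this
  have h1 := h0.add_atBot (kd_sqrt_inv_zero.const_mul_atTop_of_neg (neg_lt_zero.2 hz))
  have h2 := h0.add_atTop (kd_sqrt_inv_zero.const_mul_atTop hz)
  exact ((kd_tendsto_bot.comp h1).sub ((kd_tendsto_top.comp h2).const_mul _)).div_const _

open Filter Topology in
lemma kdF_top (z c : ℝ) (hc : 0 ≤ c) : Tendsto (kdF z c) atTop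
    (𝓝 ((√(2 * π) / 2 - Real.exp (2 * c * z) * (√(2 * π) / 2)) / √(2 * π))) := by
  have hi : Tendsto (fun t : ℝ => (√t)⁻¹) atTop (𝓝 0) :=
    tendsto_inv_atTop_zero.comp Real.tendsto_sqrt_atTop
  have hb (b : ℝ) : Tendsto (fun t : ℝ => b * (√t)⁻¹) atTop (𝓝 0) := by
    simpa using hi.const_mul b
  rcases hc.eq_or_lt with rfl | hc
  · have hP : Tendsto (fun x : ℝ => ∫ u in (0:ℝ)..x, Real.exp (-(1/2) * u ^ 2)) (𝓝 0) (𝓝 0) := by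
      simpa using (kd_deriv 0).continuousAt.tendsto
    have := ((hP.comp (hb (-z))).sub ((hP.comp (hb z)).const_mul 1)).div_const (√(2 * π))
    have e : kdF z 0 = fun t => kdF z 0 t := rfl
    rw [e]
    simpa [kdF, Function.comp_def] using this
  · have h0 := Real.tendsto_sqrt_atTop.const_mul_atTop hc
    exact ((kd_tendsto_top.comp (h0.atTop_add (hb (-z)))).sub
      ((kd_tendsto_top.comp (h0.atTop_add (hb z))).const_mul _)).div_const _

/-- Kendall's identity for Brownian motion with nonnegative drift `c`: the first passage density
`(z/t)·(2πt)^(-1/2)·exp(−(z − c·t)²/(2t))` integrates to `1` over `(0,∞)`. -/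
theorem kendall_first_passage_density_integral (z c : ℝ) (hz : 0 < z) (hc : 0 ≤ c) :
    (∫ t in Set.Ioi (0 : ℝ),
        z / t * ((2 * Real.pi * t) ^ (-(1 : ℝ) / 2) *
          Real.exp (-(z - c * t) ^ 2 / (2 * t)))) = 1 := by
  have hp : 0 < √(2 * π) := Real.sqrt_pos.2 (by positivity)
  set L := (-(√(2 * π) / 2) - Real.exp (2 * c * z) * (√(2 * π) / 2)) / √(2 * π) with hL
  have hcont : ContinuousWithinAt (Function.update (kdF z c) 0 L) (Set.Ici 0) 0 := by
    rw [continuousWithinAt_update_same, Set.Ici_sdiff_left]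
    exact kdF_zero z c hz
  have hd : ∀ t ∈ Set.Ioi (0:ℝ), HasDerivAt (Function.update (kdF z c) 0 L)
      (z / t * ((2 * Real.pi * t) ^ (-(1 : ℝ) / 2) *
          Real.exp (-(z - c * t) ^ 2 / (2 * t)))) t := by
    intro t ht
    refine (kdF_deriv z c t ht).congr_of_eventuallyEq ?_
    filter_upwards [Ioi_mem_nhds ht] with s hs
    exact Function.update_of_ne (ne_of_gt hs) _ _
  have hnn : ∀ t ∈ Set.Ioi (0:ℝ), 0 ≤ z / t * ((2 * Real.pi * t) ^ (-(1 : ℝ) / 2) *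
          Real.exp (-(z - c * t) ^ 2 / (2 * t))) := by
    intro t ht
    have : 0 < t := ht
    positivity
  have htop := (kdF_top z c hc).congr' (f₂ := Function.update (kdF z c) 0 L) (by
    filter_upwards [Filter.Ioi_mem_atTop (0:ℝ)] with s hs
    exact (Function.update_of_ne (ne_of_gt hs) _ _).symm)
  rw [integral_Ioi_of_hasDerivAt_of_nonneg hcont hd hnn htop, Function.update_self, hL]
  field_simp
  ring
end
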